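/- Let (A,Λ) be any associative form ring with 1 and let (I,Γ), (J,Δ), (K,Θ), (L,Ξ) be form ideals of (A,Λ). If either n ≥ 4, or n ≥ 3 and at least one of the four ideals equals its corresponding relative form parameter (as sets), then [[EU(2n,I,Γ), EU(2n,J,Δ)], [EU(2n,K,Θ), EU(2n,L,Ξ)]] = [EU(2n,(I,Γ)∘(J,Δ)), EU(2n,(K,Θ)∘(L,Ξ))]. -/

import Mathlib

open Matrix
open scoped commutatorElement

/-- Bak's form ring data on a ring `A`: an involution `bar`, a central symmetry
`λ` with `λ λ̄ = 1`, and a form parameter `Λ`. -/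
structure FormRingData (A : Type*) [Ring A] where
  bar : A →+ A
  bar_mul : ∀ a b : A, bar (a * b) = bar b * bar a
  bar_bar : ∀ a : A, bar (bar a) = a
  lam : A
  lam_comm : ∀ a : A, lam * a = a * lam
  lam_bar : lam * bar lam = 1
  Lambda : AddSubgroup A
  lambdaMin_mem : ∀ c : A, c - lam * bar c ∈ Lambda
  lambdaMax_mem : ∀ x ∈ Lambda, x = -(lam * bar x)
  lambda_conj : ∀ (c : A), ∀ x ∈ Lambda, c * x * bar c ∈ Lambda

namespace FormRingData

variable {A : Type*} [Ring A]

/-- Integral powers of the symmetry `λ`; negative powers use `λ̄ = λ⁻¹`. -/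
def lpow (D : FormRingData A) (k : ℤ) : A :=
  if 0 ≤ k then D.lam ^ k.toNat else (D.bar D.lam) ^ (-k).toNat

end FormRingData

/-- The index set `Ω = {1,…,n,−n,…,−1}`, coded as `Fin n × Bool`
(second component `true` = positive index). -/
abbrev Idx (n : ℕ) := Fin n × Bool

namespace Idx

/-- The involution `i ↦ −i` on indices. -/
def neg {n : ℕ} (i : Idx n) : Idx n := (i.1, !i.2)

/-- The sign `ε(i) ∈ {±1}`. -/
def eps {n : ℕ} (i : Idx n) : ℤ := if i.2 then 1 else -1

theorem neg_ne {n : ℕ} (i : Idx n) : neg i ≠ i := by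
  simp [neg, Prod.ext_iff]

theorem neg_injective {n : ℕ} : Function.Injective (neg (n := n)) := by
  intro i j h
  simp only [neg, Prod.mk.injEq] at h
  refine Prod.ext h.1 ?_
  have h2 := h.2
  cases hi : i.2 <;> cases hj : j.2 <;> simp_all

theorem neg_neg {n : ℕ} (i : Idx n) : neg (neg i) = i := by
  simp [neg]

end Idx

/-- `GL(2n, A)`, realised as the units of the `Ω × Ω` matrix ring over `A`. -/
abbrev GLn (A : Type*) [Ring A] (n : ℕ) := (Matrix (Idx n) (Idx n) A)ˣ

section aux

theorem one_add_mul_one_sub {R : Type*} [Ring R] {X : R} (h : X * X = 0) :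
    (1 + X) * (1 - X) = 1 := by
  have hh : (1 + X) * (1 - X) = 1 - X * X := by noncomm_ring
  rw [hh, h, sub_zero]

theorem one_sub_mul_one_add {R : Type*} [Ring R] {X : R} (h : X * X = 0) :
    (1 - X) * (1 + X) = 1 := by
  have hh : (1 - X) * (1 + X) = 1 - X * X := by noncomm_ring
  rw [hh, h, sub_zero]

theorem stdBasisMatrix_neg' {A : Type*} [Ring A] {n : ℕ} (i j : Idx n) (c : A) :
    single i j (-c) = -single i j c := by
  refine eq_neg_of_add_eq_zero_left ?_
  rw [← Matrix.single_add]
  simp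

end aux

namespace FormRingData

variable {A : Type*} [Ring A] {n : ℕ}

/-- The off-diagonal part of a short root element. -/
def Xmat (D : FormRingData A) (i j : Idx n) (c : A) : Matrix (Idx n) (Idx n) A :=
  single i j c -
    single (Idx.neg j) (Idx.neg i) (D.lpow ((Idx.eps j - Idx.eps i) / 2) * D.bar c)

theorem Xmat_mul (D : FormRingData A) {i j : Idx n} (hij : i ≠ j) (c c' : A) :
    D.Xmat i j c * D.Xmat i j c' = 0 := by
  unfold Xmat
  rw [sub_mul, mul_sub, mul_sub,
    Matrix.single_mul_single_of_ne _ _ _ _ (Ne.symm hij),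
    Matrix.single_mul_single_of_ne _ _ _ _ (Ne.symm (Idx.neg_ne j)),
    Matrix.single_mul_single_of_ne _ _ _ _ (Idx.neg_ne i),
    Matrix.single_mul_single_of_ne _ _ _ _ (fun h => hij (Idx.neg_injective h))]
  simp

theorem Xmat_neg (D : FormRingData A) (i j : Idx n) (c : A) :
    D.Xmat i j (-c) = -D.Xmat i j c := by
  unfold Xmat
  rw [map_neg, mul_neg, stdBasisMatrix_neg', stdBasisMatrix_neg']
  abel

/-- The elementary short root unipotent `T_{ij}(c)`, for `i ≠ ±j`
(with junk value `1` when `i = j`). -/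
def TS (D : FormRingData A) (i j : Idx n) (c : A) : GLn A n :=
  if h : i = j then 1 else
    { val := 1 + D.Xmat i j c
      inv := 1 + D.Xmat i j (-c)
      val_inv := by
        rw [D.Xmat_neg, ← sub_eq_add_neg]
        exact one_add_mul_one_sub (D.Xmat_mul h c c)
      inv_val := by
        rw [D.Xmat_neg, ← sub_eq_add_neg]
        exact one_sub_mul_one_add (D.Xmat_mul h c c) }

/-- The elementary long root unipotent `T_{i,−i}(c)`. -/
def TL (D : FormRingData A) (i : Idx n) (c : A) : GLn A n where
  val := 1 + single i (Idx.neg i) c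
  inv := 1 + single i (Idx.neg i) (-c)
  val_inv := by
    rw [stdBasisMatrix_neg', ← sub_eq_add_neg]
    exact one_add_mul_one_sub (Matrix.single_mul_single_of_ne _ _ _ _ (Idx.neg_ne i) _)
  inv_val := by
    rw [stdBasisMatrix_neg', ← sub_eq_add_neg]
    exact one_sub_mul_one_add (Matrix.single_mul_single_of_ne _ _ _ _ (Idx.neg_ne i) _)

/-- The elementary unitary transvection `T_{ij}(c)` (long or short root type
according to whether `j = −i`). -/
def T (D : FormRingData A) (i j : Idx n) (c : A) : GLn A n :=
  if j = Idx.neg i then D.TL i c else D.TS i j c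

/-- The elementary commutator `Y_{ij}(a,b) = [T_{ij}(a), T_{ji}(b)]`. -/
def Y (D : FormRingData A) (i j : Idx n) (a b : A) : GLn A n :=
  ⁅D.T i j a, D.T j i b⁆

/-- The elementary conjugate `Z_{ij}(a,c) = T_{ji}(c) T_{ij}(a) T_{ji}(−c)`. -/
def Z (D : FormRingData A) (i j : Idx n) (a c : A) : GLn A n :=
  D.T j i c * D.T i j a * D.T j i (-c)

/-- The set of elementary unitary transvections of level `(I,Γ)`. -/
def transvGen (D : FormRingData A) (n : ℕ) (I Γ : AddSubgroup A) : Set (GLn A n) :=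
  {x | ∃ i j : Idx n, i ≠ j ∧ i ≠ Idx.neg j ∧ ∃ c ∈ I, x = D.TS i j c} ∪
    {x | ∃ i : Idx n, ∃ g ∈ Γ, x = D.TL i (D.lpow (-(Idx.eps i + 1) / 2) * g)}

/-- The unrelative elementary subgroup `FU(2n, I, Γ)`. -/
def FU (D : FormRingData A) (n : ℕ) (I Γ : AddSubgroup A) : Subgroup (GLn A n) :=
  Subgroup.closure (D.transvGen n I Γ)

/-- The absolute elementary unitary group `EU(2n, A, Λ)`. -/
def EUmax (D : FormRingData A) (n : ℕ) : Subgroup (GLn A n) :=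
  D.FU n ⊤ D.Lambda

/-- The relative elementary subgroup `EU(2n, I, Γ)`: the normal closure of
`FU(2n, I, Γ)` in `EU(2n, A, Λ)`. -/
def EU (D : FormRingData A) (n : ℕ) (I Γ : AddSubgroup A) : Subgroup (GLn A n) :=
  Subgroup.closure {x | ∃ g ∈ D.EUmax n, ∃ t ∈ D.transvGen n I Γ, x = g * t * g⁻¹}

/-- The additive subgroup generated by products `st`, `s ∈ S`, `t ∈ T`. -/
def mulSub (S T : AddSubgroup A) : AddSubgroup A :=
  AddSubgroup.closure {x | ∃ a ∈ S, ∃ b ∈ T, x = a * b}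

/-- The symmetrised product `ST + TS` of two (additive subgroups underlying)
two-sided ideals. -/
def symI (S T : AddSubgroup A) : AddSubgroup A :=
  mulSub S T ⊔ mulSub T S

/-- The minimal relative form parameter `Γ_min(K)` of level `K`. -/
def gammaMin (D : FormRingData A) (K : AddSubgroup A) : AddSubgroup A :=
  AddSubgroup.closure
    ({x | ∃ a ∈ K, x = a - D.lam * D.bar a} ∪
      {x | ∃ a ∈ K, ∃ c ∈ D.Lambda, x = a * c * D.bar a})

/-- The relative form parameter `ˢΓ = ⟨ b γ b̄ ∣ b ∈ S, γ ∈ Γ ⟩`. -/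
def conjPar (D : FormRingData A) (S Γ : AddSubgroup A) : AddSubgroup A :=
  AddSubgroup.closure {x | ∃ b ∈ S, ∃ g ∈ Γ, x = b * g * D.bar b}

/-- The relative form parameter of the symmetrised product
`(I,Γ)∘(J,Δ) = (IJ+JI, Γ_min(IJ+JI) + ᴶΓ + ᴵΔ)`. -/
def symG (D : FormRingData A) (I Γ J Δ : AddSubgroup A) : AddSubgroup A :=
  D.gammaMin (symI I J) ⊔ D.conjPar J Γ ⊔ D.conjPar I Δ

/-- The elementary subgroup `EU(2n, (I,Γ)∘(J,Δ))` of the symmetrised product. -/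
def EUsym (D : FormRingData A) (n : ℕ) (I Γ J Δ : AddSubgroup A) : Subgroup (GLn A n) :=
  D.EU n (symI I J) (D.symG I Γ J Δ)

/-- Position-dependent membership `a ∈ (I,Γ)` at position `(i,j)`:
`a ∈ I` for a short root position, `a ∈ λ^{−(ε(i)+1)/2}Γ` for a long one. -/
def pmem (D : FormRingData A) (I Γ : AddSubgroup A) {n : ℕ} (i j : Idx n) (a : A) : Prop :=
  if j = Idx.neg i then ∃ g ∈ Γ, a = D.lpow (-(Idx.eps i + 1) / 2) * g else a ∈ I

end FormRingData

/-- A form ideal `(I,Γ)` of the form ring `(A,Λ)`. -/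
structure FormIdeal {A : Type*} [Ring A] (D : FormRingData A) where
  I : AddSubgroup A
  Gamma : AddSubgroup A
  mul_mem_left : ∀ (c : A), ∀ x ∈ I, c * x ∈ I
  mul_mem_right : ∀ (c : A), ∀ x ∈ I, x * c ∈ I
  bar_mem : ∀ x ∈ I, D.bar x ∈ I
  gammaMin_le : D.gammaMin I ≤ Gamma
  gamma_le_I : Gamma ≤ I
  gamma_le_Lambda : Gamma ≤ D.Lambda
  gamma_conj : ∀ (c : A), ∀ x ∈ Gamma, c * x * D.bar c ∈ Gamma

/-!
A generating family of elements satisfying the relations among the elementary transvections (a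
Steinberg family) stays one in every quotient, so an inclusion between normal subgroups can be
proved by factoring out the larger one and showing that the smaller one becomes trivial.

Factoring out `EU(F ∘ G)` makes root elements of levels `F` and `G` commute unless their roots are
opposite. Then the elementary commutators `[T_ij(a), T_ji(b)]` are central, and the Hall–Witt type
manipulations that rewrite one root element as a commutator of two others move them from one root
to another. Hence `[EU(F), EU(G)]` is generated modulo `EU(F ∘ G)` by the elementary commutators
for one long and one short root, and the long one suffices if one of the two ideals is its own
form parameter. The hypothesis on `n` leaves room to choose the indices of these roots disjoint
for `F, G` and for `K, L`, so that the two sets of elementary commutators commute. Factoring out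
`[EU(F ∘ G), EU(K ∘ L)]`, the remaining mixed terms vanish because
`[EU(F), [EU(K), EU(L)]]` is trivial as soon as `[EU(F), EU(K ∘ L)]` is.

To control normal closures, `EU(F)` is generated by conjugates of root elements under the rank one
subgroups of their own roots; a linear functional vanishing on a root and positive on another one
gives a unipotent subgroup which the rank one subgroup of the former normalises.
-/

namespace Idx

variable {n : ℕ} {i j : Idx n}

theorem neg_fst (i : Idx n) : (neg i).1 = i.1 := rfl

theorem neg_eq_neg : neg i = neg j ↔ i = j := neg_injective.eq_iff

theorem eq_neg_comm : i = neg j ↔ j = neg i := by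
  constructor <;> rintro rfl <;> rw [neg_neg]

theorem fst_eq_fst_iff : i.1 = j.1 ↔ i = j ∨ i = neg j := by
  rcases i with ⟨i, _ | _⟩ <;> rcases j with ⟨j, _ | _⟩ <;> simp [neg]

theorem ne_neg_of_fst_ne (h : i.1 ≠ j.1) : i ≠ neg j := fun e => h (fst_eq_fst_iff.2 (.inr e))

end Idx

attribute [local grind =] Idx.neg_fst Idx.neg_neg Idx.neg_eq_neg
attribute [local grind! .] Idx.neg_ne

/-! ## Root elements -/

theorem commutatorElement_eq_of_one_add {R : Type*} [Ring R] {u v w : Rˣ} {X Y Z : R}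
    (hu : (u : R) = 1 + X) (hv : (v : R) = 1 + Y) (hw : (w : R) = 1 + Z)
    (hZX : Z * X = 0) (hZYX : Z * Y * X = 0) (hXY : X * Y = Y * X + Z + Z * Y) :
    ⁅u, v⁆ = w := by
  rw [commutatorElement_def, mul_inv_eq_iff_eq_mul, mul_inv_eq_iff_eq_mul, Units.ext_iff]
  have expand : (1 + Z) * (1 + Y) * (1 + X) =
      1 + X + Y + (Y * X + Z + Z * Y) + Z * X + Z * Y * X := by noncomm_ring
  simp only [Units.val_mul, hu, hv, hw]
  rw [expand, ← hXY, hZX, hZYX]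
  noncomm_ring

namespace FormRingData

variable {A : Type*} [Ring A] {n : ℕ} (D : FormRingData A)

theorem bar_one : D.bar 1 = 1 := by
  have h := D.bar_mul (D.bar 1) 1
  rwa [mul_one, D.bar_bar, mul_one, eq_comm] at h

theorem bar_lam_comm (a : A) : D.bar D.lam * a = a * D.bar D.lam := by
  have h := congrArg D.bar (D.lam_comm (D.bar a))
  rwa [D.bar_mul, D.bar_mul, D.bar_bar, eq_comm] at h

theorem bar_lam_mul_lam : D.bar D.lam * D.lam = 1 := by
  rw [D.bar_lam_comm, D.lam_bar]

theorem lam_mul_bar_lam_mul_bar (a : A) : D.lam * D.bar (D.lam * D.bar a) = a := by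
  rw [D.bar_mul, D.bar_bar, D.lam_comm, mul_assoc, D.bar_lam_mul_lam, mul_one]

/-- The factor `λ^{−(ε(i)+1)/2}` which the definition of the form parameter at the long root
position `(i, −i)` carries. -/
def weight (i : Idx n) : A := D.lpow (-(Idx.eps i + 1) / 2)

theorem weight_eq (i : Idx n) : D.weight i = if i.2 then D.bar D.lam else 1 := by
  rcases i with ⟨i, _ | _⟩ <;> simp [weight, Idx.eps, lpow]

theorem weight_comm (i : Idx n) (a : A) : D.weight i * a = a * D.weight i := by
  rw [weight_eq]
  split_ifs
  · exact D.bar_lam_comm a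
  · simp

theorem bar_weight_comm (i : Idx n) (a : A) :
    D.bar (D.weight i) * a = a * D.bar (D.weight i) := by
  simpa only [D.bar_mul, D.bar_bar] using congrArg D.bar (D.weight_comm i (D.bar a)).symm

theorem bar_weight (i : Idx n) : D.bar (D.weight i) = D.lam * D.weight (Idx.neg i) := by
  rcases i with ⟨i, _ | _⟩ <;> simp [weight_eq, Idx.neg, D.bar_one, D.bar_bar, D.lam_bar]

theorem weight_neg_mul_weight (i : Idx n) : D.weight (Idx.neg i) * D.weight i = D.bar D.lam := by
  rcases i with ⟨i, _ | _⟩ <;> simp [weight_eq, Idx.neg]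

theorem weight_mul_bar_weight (i : Idx n) : D.weight i * D.bar (D.weight i) = 1 := by
  rw [D.bar_weight, ← mul_assoc, D.weight_comm, mul_assoc, D.weight_comm, D.weight_neg_mul_weight,
    D.lam_bar]

theorem lpow_mul_bar_weight (i j : Idx n) :
    D.lpow ((Idx.eps (Idx.neg j) - Idx.eps i) / 2) * D.bar (D.weight i) =
      D.lam * D.weight j := by
  rcases i with ⟨i, _ | _⟩ <;> rcases j with ⟨j, _ | _⟩ <;>
    simp [weight_eq, Idx.eps, Idx.neg, lpow, D.bar_one, D.bar_bar, D.bar_lam_mul_lam, D.lam_bar]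

/-- The weighted matrix unit at position `(i, −j)`. With these weights `λ`-hermitian symmetry takes
the same form at every position, so that no signs of indices occur in the relations below. -/
def weightedUnit (i j : Idx n) (c : A) : Matrix (Idx n) (Idx n) A :=
  single i (Idx.neg j) (D.weight i * c)

theorem weightedUnit_mul_of_ne {j k : Idx n} (h : k ≠ Idx.neg j) (i l : Idx n) (a b : A) :
    D.weightedUnit i j a * D.weightedUnit k l b = 0 :=
  single_mul_single_of_ne _ _ _ _ h.symm _

theorem weightedUnit_mul_neg (i j l : Idx n) (a b : A) :
    D.weightedUnit i j a * D.weightedUnit (Idx.neg j) l b =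
      D.weightedUnit i l (D.weight (Idx.neg j) * (a * b)) := by
  simp only [weightedUnit, single_mul_single_same, mul_assoc]
  rw [← mul_assoc a, ← D.weight_comm, mul_assoc]

theorem weightedUnit_neg_mul (i j l : Idx n) (a b : A) :
    D.weightedUnit i (Idx.neg j) a * D.weightedUnit j l b =
      D.weightedUnit i l (D.weight j * (a * b)) := by
  simpa only [Idx.neg_neg] using D.weightedUnit_mul_neg i (Idx.neg j) l a b

theorem weightedUnit_add (i j : Idx n) (a b : A) :
    D.weightedUnit i j (a + b) = D.weightedUnit i j a + D.weightedUnit i j b := by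
  simp only [weightedUnit, mul_add, single_add]

theorem weightedUnit_neg (i j : Idx n) (a : A) :
    D.weightedUnit i j (-a) = -D.weightedUnit i j a := by
  simp only [weightedUnit, mul_neg, stdBasisMatrix_neg']

/-- The nilpotent part of a short root element, in terms of weighted matrix units. -/
def skewUnit (i j : Idx n) (c : A) : Matrix (Idx n) (Idx n) A :=
  D.weightedUnit i j c - D.weightedUnit j i (D.lam * D.bar c)

/-- The elementary transvection at the position `(i, −j)`, in the parametrisation by weighted
matrix units. Indexing by `i` and `−j` makes it the root element of the root `e i + e j`, where
`e (−i) = −e i`; so it is long for `i = j`, and `i = −j` does not occur. -/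
def rootElem (i j : Idx n) (c : A) : GLn A n :=
  if i = j then D.TL i (D.weight i * c) else D.TS i (Idx.neg j) (D.weight i * c)

theorem rootElem_long (i : Idx n) (c : A) :
    ((D.rootElem i i c : GLn A n) : Matrix (Idx n) (Idx n) A) = 1 + D.weightedUnit i i c := by
  simp only [rootElem, if_true, TL, weightedUnit]

theorem rootElem_short {i j : Idx n} (h : i.1 ≠ j.1) (c : A) :
    ((D.rootElem i j c : GLn A n) : Matrix (Idx n) (Idx n) A) = 1 + D.skewUnit i j c := by
  have hij : i ≠ j := by grind
  simp only [rootElem, hij, TS, Idx.ne_neg_of_fst_ne h, if_false, dite_false, Xmat, skewUnit,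
    weightedUnit, Idx.neg_neg]
  rw [D.bar_mul, ← D.bar_weight_comm, ← mul_assoc, D.lpow_mul_bar_weight, D.lam_comm, mul_assoc]

theorem skewUnit_neg_swap (i j : Idx n) (a : A) :
    D.skewUnit j i (-(D.lam * D.bar a)) = D.skewUnit i j a := by
  rw [skewUnit, skewUnit, map_neg, mul_neg, weightedUnit_neg, weightedUnit_neg,
    D.lam_mul_bar_lam_mul_bar]
  abel

/-- The nilpotent part of a root element. -/
def rootMatrix (i j : Idx n) (c : A) : Matrix (Idx n) (Idx n) A :=
  if i = j then D.weightedUnit i i c else D.skewUnit i j c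

theorem coe_rootElem {i j : Idx n} (h : i ≠ Idx.neg j) (c : A) :
    ((D.rootElem i j c : GLn A n) : Matrix (Idx n) (Idx n) A) = 1 + D.rootMatrix i j c := by
  by_cases hij : i = j
  · subst hij
    rw [rootElem_long, rootMatrix, if_pos rfl]
  · rw [rootElem_short, rootMatrix, if_neg hij]
    rw [Ne, Idx.fst_eq_fst_iff]
    exact not_or.2 ⟨hij, h⟩

theorem rootMatrix_mul_of_ne {i j k l : Idx n} (hki : k ≠ Idx.neg i) (hkj : k ≠ Idx.neg j)
    (hli : l ≠ Idx.neg i) (hlj : l ≠ Idx.neg j) (a b : A) :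
    D.rootMatrix i j a * D.rootMatrix k l b = 0 := by
  unfold rootMatrix skewUnit
  split_ifs <;>
    simp only [sub_mul, mul_sub, D.weightedUnit_mul_of_ne, sub_zero, *, Ne, not_false_eq_true]

theorem rootMatrix_add (i j : Idx n) (a b : A) :
    D.rootMatrix i j (a + b) = D.rootMatrix i j a + D.rootMatrix i j b := by
  unfold rootMatrix skewUnit
  split_ifs
  · exact D.weightedUnit_add i i a b
  · simp only [map_add, mul_add, weightedUnit_add]
    abel

theorem rootElem_add {i j : Idx n} (h : i ≠ Idx.neg j) (a b : A) :
    D.rootElem i j (a + b) = D.rootElem i j a * D.rootElem i j b := by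
  rw [Units.ext_iff, Units.val_mul]
  simp only [D.coe_rootElem h, rootMatrix_add, mul_add, add_mul, one_mul, mul_one,
    D.rootMatrix_mul_of_ne (Idx.neg_ne i).symm h (Idx.eq_neg_comm.not.1 h) (Idx.neg_ne j).symm]
  abel

theorem rootElem_swap {i j : Idx n} (h : i.1 ≠ j.1) (a : A) :
    D.rootElem i j a = D.rootElem j i (-(D.lam * D.bar a)) := by
  rw [Units.ext_iff, D.rootElem_short h, D.rootElem_short h.symm, skewUnit_neg_swap]

theorem rootElem_commute {i j k l : Idx n} (hij : i ≠ Idx.neg j) (hkl : k ≠ Idx.neg l)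
    (hki : k ≠ Idx.neg i) (hkj : k ≠ Idx.neg j) (hli : l ≠ Idx.neg i) (hlj : l ≠ Idx.neg j)
    (a b : A) : Commute (D.rootElem i j a) (D.rootElem k l b) := by
  have hXY := D.rootMatrix_mul_of_ne hki hkj hli hlj a b
  have hYX : D.rootMatrix k l b * D.rootMatrix i j a = 0 :=
    D.rootMatrix_mul_of_ne (by grind) (by grind) (by grind) (by grind) b a
  rw [Commute, SemiconjBy, Units.ext_iff]
  simp only [Units.val_mul, D.coe_rootElem hij, D.coe_rootElem hkl, mul_add, add_mul, hXY, hYX]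
  noncomm_ring

theorem weight_mul_lam_mul_bar (j : Idx n) (a b : A) :
    D.weight j * (D.lam * D.bar b * (D.lam * D.bar a)) =
      D.lam * D.bar (D.weight (Idx.neg j) * (a * b)) := by
  rw [D.bar_mul, D.bar_mul, ← D.bar_weight_comm, D.bar_weight, Idx.neg_neg]
  calc D.weight j * (D.lam * D.bar b * (D.lam * D.bar a))
      = D.weight j * (D.lam * (D.bar b * D.lam) * D.bar a) := by noncomm_ring
    _ = D.weight j * (D.lam * D.lam) * (D.bar b * D.bar a) := by
        rw [← D.lam_comm (D.bar b)]
        noncomm_ring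
    _ = D.lam * (D.lam * D.weight j * (D.bar b * D.bar a)) := by
        rw [D.weight_comm]
        noncomm_ring

theorem commutator_eq_of_skewUnit {i j l : Idx n} (hij : i.1 ≠ j.1) (hlj : l.1 ≠ j.1)
    (hil : i ≠ Idx.neg l) (a b : A) {u : GLn A n}
    (hu : (u : Matrix (Idx n) (Idx n) A) =
      1 + D.skewUnit i l (D.weight (Idx.neg j) * (a * b))) :
    ⁅D.rootElem i j a, D.rootElem (Idx.neg j) l b⁆ = u := by
  have hXY : D.skewUnit i j a * D.skewUnit (Idx.neg j) l b =
      D.weightedUnit i l (D.weight (Idx.neg j) * (a * b)) := by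
    simp (disch := grind) only [skewUnit, mul_sub, sub_mul, weightedUnit_mul_of_ne,
      weightedUnit_mul_neg, sub_zero]
  have hYX : D.skewUnit (Idx.neg j) l b * D.skewUnit i j a =
      D.weightedUnit l i (D.lam * D.bar (D.weight (Idx.neg j) * (a * b))) := by
    rw [← weight_mul_lam_mul_bar]
    simp (disch := grind) only [skewUnit, mul_sub, sub_mul, weightedUnit_mul_of_ne,
      weightedUnit_neg_mul, sub_zero, zero_sub, _root_.neg_neg]
  have hZY (c : A) : D.skewUnit i l c * D.skewUnit (Idx.neg j) l b = 0 := by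
    simp (disch := grind) only [skewUnit, mul_sub, sub_mul, weightedUnit_mul_of_ne, sub_zero]
  refine commutatorElement_eq_of_one_add (D.rootElem_short hij a)
    (D.rootElem_short (by grind) b) hu ?_ ?_ ?_
  · simp (disch := grind) only [skewUnit, mul_sub, sub_mul, weightedUnit_mul_of_ne, sub_zero]
  · rw [hZY, zero_mul]
  · rw [hXY, hYX, hZY, skewUnit]
    abel

theorem commutator_rootElem_short {i j l : Idx n} (hij : i.1 ≠ j.1) (hlj : l.1 ≠ j.1)
    (hil : i.1 ≠ l.1) (a b : A) :
    ⁅D.rootElem i j a, D.rootElem (Idx.neg j) l b⁆ =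
      D.rootElem i l (D.weight (Idx.neg j) * (a * b)) :=
  D.commutator_eq_of_skewUnit hij hlj (Idx.ne_neg_of_fst_ne hil) a b (D.rootElem_short hil _)

theorem commutator_rootElem_short_long {i j : Idx n} (hij : i.1 ≠ j.1) (a b : A) :
    ⁅D.rootElem i j a, D.rootElem (Idx.neg j) i b⁆ =
      D.rootElem i i (D.weight (Idx.neg j) * (a * b) -
        D.lam * D.bar (D.weight (Idx.neg j) * (a * b))) := by
  refine D.commutator_eq_of_skewUnit hij hij (Idx.neg_ne i).symm a b ?_
  rw [rootElem_long, skewUnit, sub_eq_add_neg, weightedUnit_add, weightedUnit_neg, sub_eq_add_neg]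

theorem commutator_rootElem_long_short {j l : Idx n} (hlj : l.1 ≠ j.1) {g : A}
    (hg : g ∈ D.Lambda) (b : A) :
    ⁅D.rootElem j j g, D.rootElem (Idx.neg j) l b⁆ =
      D.rootElem j l (D.weight (Idx.neg j) * (g * b)) *
        D.rootElem l l (-(D.bar b * g * b)) := by
  set c := D.weight (Idx.neg j) * (g * b) with hc
  have hbar : D.lam * D.bar c = -(D.weight j * (D.lam * D.bar b * g)) := by
    rw [← weight_mul_lam_mul_bar]
    nth_rewrite 2 [D.lambdaMax_mem g hg]
    rw [mul_neg, mul_neg, _root_.neg_neg]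
  have hXY : D.weightedUnit j j g * D.skewUnit (Idx.neg j) l b = D.weightedUnit j l c := by
    simp (disch := grind) only [skewUnit, mul_sub, weightedUnit_mul_of_ne,
      weightedUnit_mul_neg, sub_zero, hc]
  have hYX : D.skewUnit (Idx.neg j) l b * D.weightedUnit j j g =
      D.weightedUnit l j (D.lam * D.bar c) := by
    simp (disch := grind) only [skewUnit, sub_mul, weightedUnit_mul_of_ne,
      weightedUnit_neg_mul, zero_sub, hbar, weightedUnit_neg]
  have hZY : (D.skewUnit j l c + D.weightedUnit l l (-(D.bar b * g * b))) *
      D.skewUnit (Idx.neg j) l b = D.weightedUnit l l (D.bar b * g * b) := by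
    have hcoeff : D.weight (Idx.neg j) * (D.weight j * (D.lam * D.bar b * g) * b) =
        D.bar b * g * b := by
      calc _ = D.weight (Idx.neg j) * D.weight j * D.lam * (D.bar b * g * b) := by noncomm_ring
        _ = _ := by rw [weight_neg_mul_weight, D.bar_lam_mul_lam, one_mul]
    simp (disch := grind) only [skewUnit, mul_sub, sub_mul, add_mul, weightedUnit_mul_of_ne,
      weightedUnit_mul_neg, hbar, weightedUnit_neg, neg_mul, neg_zero, sub_zero, zero_sub,
      add_zero, _root_.neg_neg, hcoeff]
  refine commutatorElement_eq_of_one_add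
    (Z := D.skewUnit j l c + D.weightedUnit l l (-(D.bar b * g * b)))
    (D.rootElem_long j g) (D.rootElem_short (by grind) b) ?_ ?_ ?_ ?_
  · have hprod : D.skewUnit j l c * D.weightedUnit l l (-(D.bar b * g * b)) = 0 := by
      simp (disch := grind) only [skewUnit, sub_mul, weightedUnit_mul_of_ne, sub_zero]
    rw [Units.val_mul, D.rootElem_short (by grind), rootElem_long, mul_add, mul_one, add_mul, hprod]
    noncomm_ring
  · simp (disch := grind) only [skewUnit, sub_mul, add_mul, weightedUnit_mul_of_ne, sub_zero,
      add_zero]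
  · rw [hZY]
    simp (disch := grind) only [weightedUnit_mul_of_ne]
  · rw [hXY, hYX, hZY, skewUnit, weightedUnit_neg]
    abel

end FormRingData

/-! ## Form ideals and their symmetrised products -/

namespace FormRingData

variable {A : Type*} [Ring A] {S T K : AddSubgroup A}

theorem symI_le (hl : ∀ a ∈ S, ∀ b ∈ T, a * b ∈ K) (hr : ∀ a ∈ S, ∀ b ∈ T, b * a ∈ K) :
    symI S T ≤ K := by
  rw [symI, mulSub, mulSub, sup_le_iff, AddSubgroup.closure_le, AddSubgroup.closure_le]
  constructor
  · rintro _ ⟨a, ha, b, hb, rfl⟩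
    exact hl a ha b hb
  · rintro _ ⟨b, hb, a, ha, rfl⟩
    exact hr a ha b hb

theorem mul_mem_symI {a b : A} (ha : a ∈ S) (hb : b ∈ T) : a * b ∈ symI S T :=
  AddSubgroup.mem_sup_left (AddSubgroup.subset_closure ⟨a, ha, b, hb, rfl⟩)

theorem mul_mem_symI' {a b : A} (ha : a ∈ S) (hb : b ∈ T) : b * a ∈ symI S T :=
  AddSubgroup.mem_sup_right (AddSubgroup.subset_closure ⟨b, hb, a, ha, rfl⟩)

variable (D : FormRingData A)

theorem gammaMin_le_iff : D.gammaMin S ≤ K ↔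
    (∀ a ∈ S, a - D.lam * D.bar a ∈ K) ∧
      ∀ a ∈ S, ∀ c ∈ D.Lambda, a * c * D.bar a ∈ K := by
  rw [gammaMin, AddSubgroup.closure_le, Set.union_subset_iff]
  refine and_congr ⟨fun h a ha => h ⟨a, ha, rfl⟩, ?_⟩
    ⟨fun h a ha c hc => h ⟨a, ha, c, hc, rfl⟩, ?_⟩
  · rintro h _ ⟨a, ha, rfl⟩
    exact h a ha
  · rintro h _ ⟨a, ha, c, hc, rfl⟩
    exact h a ha c hc

theorem conjPar_le_iff : D.conjPar S T ≤ K ↔ ∀ b ∈ S, ∀ g ∈ T, b * g * D.bar b ∈ K := by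
  rw [conjPar, AddSubgroup.closure_le]
  refine ⟨fun h b hb g hg => h ⟨b, hb, g, hg, rfl⟩, ?_⟩
  rintro h _ ⟨b, hb, g, hg, rfl⟩
  exact h b hb g hg

theorem conj_sub_lam_mul_bar (c a : A) :
    c * (a - D.lam * D.bar a) * D.bar c = c * a * D.bar c - D.lam * D.bar (c * a * D.bar c) := by
  rw [D.bar_mul, D.bar_mul, D.bar_bar, mul_sub, sub_mul, ← mul_assoc c, ← D.lam_comm]
  noncomm_ring

theorem conj_conj (b c x : A) :
    c * (b * x * D.bar b) * D.bar c = c * b * x * D.bar (c * b) := by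
  rw [D.bar_mul]
  noncomm_ring

end FormRingData

namespace FormIdeal

open FormRingData

variable {A : Type*} [Ring A] {D : FormRingData A}

theorem sub_lam_mul_bar_mem (F : FormIdeal D) {a : A} (ha : a ∈ F.I) :
    a - D.lam * D.bar a ∈ F.Gamma :=
  (D.gammaMin_le_iff.1 F.gammaMin_le).1 a ha

theorem conj_Lambda_mem (F : FormIdeal D) {a c : A} (ha : a ∈ F.I) (hc : c ∈ D.Lambda) :
    a * c * D.bar a ∈ F.Gamma :=
  (D.gammaMin_le_iff.1 F.gammaMin_le).2 a ha c hc

instance : Top (FormIdeal D) where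
  top :=
    { I := ⊤
      Gamma := D.Lambda
      mul_mem_left := fun _ _ _ => AddSubgroup.mem_top _
      mul_mem_right := fun _ _ _ => AddSubgroup.mem_top _
      bar_mem := fun _ _ => AddSubgroup.mem_top _
      gammaMin_le := D.gammaMin_le_iff.2
        ⟨fun a _ => D.lambdaMin_mem a, fun a _ c hc => D.lambda_conj a c hc⟩
      gamma_le_I := le_top
      gamma_le_Lambda := le_rfl
      gamma_conj := D.lambda_conj }

section symProd

variable (F G : FormIdeal D)

theorem symI_mul_mem_left (c : A) : ∀ x ∈ symI F.I G.I, c * x ∈ symI F.I G.I := by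
  refine symI_le (K := (symI F.I G.I).comap (AddMonoidHom.mulLeft c)) ?_ ?_ <;>
    intro a ha b hb <;>
    simp only [AddSubgroup.mem_comap, AddMonoidHom.coe_mulLeft, ← mul_assoc]
  · exact mul_mem_symI (F.mul_mem_left c a ha) hb
  · exact mul_mem_symI' ha (G.mul_mem_left c b hb)

theorem symI_mul_mem_right (c : A) : ∀ x ∈ symI F.I G.I, x * c ∈ symI F.I G.I := by
  refine symI_le (K := (symI F.I G.I).comap (AddMonoidHom.mulRight c)) ?_ ?_ <;>
    intro a ha b hb <;>
    simp only [AddSubgroup.mem_comap, AddMonoidHom.mulRight_apply, mul_assoc]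
  · exact mul_mem_symI ha (G.mul_mem_right c b hb)
  · exact mul_mem_symI' (F.mul_mem_right c a ha) hb

theorem symI_bar_mem : ∀ x ∈ symI F.I G.I, D.bar x ∈ symI F.I G.I := by
  refine symI_le (K := (symI F.I G.I).comap D.bar) ?_ ?_ <;> intro a ha b hb <;>
    simp only [AddSubgroup.mem_comap, D.bar_mul]
  · exact mul_mem_symI' (F.bar_mem a ha) (G.bar_mem b hb)
  · exact mul_mem_symI (F.bar_mem a ha) (G.bar_mem b hb)

variable {F G} in
theorem symG_le_iff {K : AddSubgroup A} : D.symG F.I F.Gamma G.I G.Gamma ≤ K ↔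
    (∀ a ∈ symI F.I G.I, a - D.lam * D.bar a ∈ K) ∧
    (∀ a ∈ symI F.I G.I, ∀ c ∈ D.Lambda, a * c * D.bar a ∈ K) ∧
    (∀ b ∈ G.I, ∀ g ∈ F.Gamma, b * g * D.bar b ∈ K) ∧
      ∀ a ∈ F.I, ∀ g ∈ G.Gamma, a * g * D.bar a ∈ K := by
  rw [symG, sup_le_iff, sup_le_iff, gammaMin_le_iff, conjPar_le_iff, conjPar_le_iff, and_assoc,
    and_assoc]

theorem symG_le_symI : D.symG F.I F.Gamma G.I G.Gamma ≤ symI F.I G.I := by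
  refine symG_le_iff.2
    ⟨fun a ha => sub_mem ha (F.symI_mul_mem_left G _ _ (F.symI_bar_mem G a ha)),
      fun a ha c _ => F.symI_mul_mem_left G _ _ (F.symI_bar_mem G a ha), ?_, ?_⟩
  · intro b hb g hg
    rw [mul_assoc]
    exact mul_mem_symI' (F.mul_mem_right _ _ (F.gamma_le_I hg)) hb
  · intro a ha g hg
    rw [mul_assoc]
    exact mul_mem_symI ha (G.mul_mem_right _ _ (G.gamma_le_I hg))

theorem symG_conj_mem (c : A) : ∀ x ∈ D.symG F.I F.Gamma G.I G.Gamma,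
    c * x * D.bar c ∈ D.symG F.I F.Gamma G.I G.Gamma := by
  obtain ⟨hmin, hLambda, hF, hG⟩ := (symG_le_iff (F := F) (G := G)).1 le_rfl
  refine (symG_le_iff (K := (D.symG F.I F.Gamma G.I G.Gamma).comap
    ((AddMonoidHom.mulRight (D.bar c)).comp (AddMonoidHom.mulLeft c)))).2 ?_
  simp only [AddSubgroup.mem_comap, AddMonoidHom.comp_apply, AddMonoidHom.coe_mulLeft,
    AddMonoidHom.mulRight_apply, conj_sub_lam_mul_bar, conj_conj]
  exact ⟨fun a ha => hmin _ (F.symI_mul_mem_right G _ _ (F.symI_mul_mem_left G _ _ ha)),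
    fun a ha => hLambda _ (F.symI_mul_mem_left G _ _ ha),
    fun b hb => hF _ (G.mul_mem_left _ _ hb), fun a ha => hG _ (F.mul_mem_left _ _ ha)⟩

/-- The symmetrised product `(I,Γ)∘(J,Δ)` as a form ideal. -/
def symProd : FormIdeal D where
  I := symI F.I G.I
  Gamma := D.symG F.I F.Gamma G.I G.Gamma
  mul_mem_left := F.symI_mul_mem_left G
  mul_mem_right := F.symI_mul_mem_right G
  bar_mem := F.symI_bar_mem G
  gammaMin_le := le_sup_left.trans le_sup_left
  gamma_le_I := F.symG_le_symI G
  gamma_le_Lambda := symG_le_iff.2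
    ⟨fun a _ => D.lambdaMin_mem a, fun a _ c hc => D.lambda_conj a c hc,
      fun b _ g hg => D.lambda_conj b g (F.gamma_le_Lambda hg),
      fun b _ g hg => D.lambda_conj b g (G.gamma_le_Lambda hg)⟩
  gamma_conj := F.symG_conj_mem G

end symProd

/-- `K` contains the products occurring in commutators of root elements of levels `F` and `G`.
The two cases of interest are `K = F ∘ G` and `F = ⊤`, `K = G`. -/
structure ProdLe (F G K : FormIdeal D) : Prop where
  mul_mem : ∀ a ∈ F.I, ∀ b ∈ G.I, a * b ∈ K.I
  mul_mem' : ∀ a ∈ F.I, ∀ b ∈ G.I, b * a ∈ K.I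
  conj_mem : ∀ a ∈ F.I, ∀ g ∈ G.Gamma, a * g * D.bar a ∈ K.Gamma
  conj_mem' : ∀ b ∈ G.I, ∀ g ∈ F.Gamma, b * g * D.bar b ∈ K.Gamma

theorem ProdLe.symm {F G K : FormIdeal D} (h : ProdLe F G K) : ProdLe G F K :=
  ⟨fun b hb a ha => h.mul_mem' a ha b hb, fun b hb a ha => h.mul_mem a ha b hb, h.conj_mem',
    h.conj_mem⟩

theorem prodLe_symProd (F G : FormIdeal D) : ProdLe F G (F.symProd G) where
  mul_mem _ ha _ hb := mul_mem_symI ha hb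
  mul_mem' _ ha _ hb := mul_mem_symI' ha hb
  conj_mem := (symG_le_iff.1 le_rfl).2.2.2
  conj_mem' := (symG_le_iff.1 le_rfl).2.2.1

theorem prodLe_top (F : FormIdeal D) : ProdLe ⊤ F F where
  mul_mem a _ b hb := F.mul_mem_left a b hb
  mul_mem' a _ b hb := F.mul_mem_right a b hb
  conj_mem a _ g hg := F.gamma_conj a g hg
  conj_mem' _ hb _ hg := F.conj_Lambda_mem hb hg

/-- The parameters at level `F` of the root elements of the root `e i + e j`. -/
def level {n : ℕ} (F : FormIdeal D) (i j : Idx n) : AddSubgroup A :=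
  if i = j then F.Gamma else F.I

section level

variable {n : ℕ} {i j : Idx n} (F : FormIdeal D)

theorem level_self (i : Idx n) : F.level i i = F.Gamma := if_pos rfl

theorem level_of_ne (h : i ≠ j) : F.level i j = F.I := if_neg h

theorem level_le_I : F.level i j ≤ F.I := by
  rw [level]
  split_ifs
  exacts [F.gamma_le_I, le_rfl]

theorem level_le_top : F.level i j ≤ (⊤ : FormIdeal D).level i j := by
  rw [level, level]
  split_ifs
  exacts [F.gamma_le_Lambda, le_top]

theorem mem_level_top (h : i ≠ j) (a : A) : a ∈ (⊤ : FormIdeal D).level i j := by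
  rw [level_of_ne _ h]
  exact AddSubgroup.mem_top a

theorem lam_mul_bar_mem {a : A} (ha : a ∈ F.I) : D.lam * D.bar a ∈ F.I :=
  F.mul_mem_left _ _ (F.bar_mem a ha)

end level

end FormIdeal

/-! ## Roots -/

namespace Idx

variable {n : ℕ}

/-- The root `e i + e j`, where `e (−i) = −e i`, as a linear form on the cocharacter lattice;
opposite indices give the zero form. -/
def root (i j : Idx n) : (Fin n → ℤ) →ₗ[ℤ] ℤ :=
  eps i • LinearMap.proj i.1 + eps j • LinearMap.proj j.1

theorem eps_neg (i : Idx n) : eps (neg i) = -eps i := by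
  cases h : i.2 <;> simp [eps, neg, h]

theorem root_comm (i j : Idx n) : root i j = root j i :=
  add_comm _ _

theorem root_neg_neg (i j : Idx n) : root (neg i) (neg j) = -root i j := by
  rw [root, root, eps_neg, eps_neg, neg_fst, neg_fst]
  module

theorem root_add_root (i j l : Idx n) : root i j + root (neg j) l = root i l := by
  rw [root, root, root, eps_neg, neg_fst]
  module

theorem root_apply (i j : Idx n) (φ : Fin n → ℤ) : root i j φ = eps i * φ i.1 + eps j * φ j.1 :=
  rfl

theorem root_single_ne_zero {i j : Idx n} (h : i ≠ neg j) : root i j (Pi.single i.1 1) ≠ 0 := by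
  have hi : eps i ≠ 0 := by
    rw [eps]
    split_ifs <;> decide
  rw [root_apply, Pi.single_eq_same]
  by_cases hij : j.1 = i.1
  · obtain rfl : j = i := (fst_eq_fst_iff.1 hij).resolve_right (eq_neg_comm.not.1 h)
    rw [Pi.single_eq_same]
    lia
  · rw [Pi.single_eq_of_ne hij]
    lia

theorem eq_neg_of_root_eq_neg_root {i j k l : Idx n} (hij : i ≠ neg j) (hkl : k ≠ neg l)
    (h : root k l = -root i j) : k = neg j ∧ l = neg i ∨ k = neg i ∧ l = neg j := by
  have hk := LinearMap.congr_fun h (Pi.single k.1 1)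
  have hl := LinearMap.congr_fun h (Pi.single l.1 1)
  simp only [LinearMap.neg_apply, root_apply, Pi.single_apply] at hk hl
  grind [neg, eps]

/-- The linear forms vanishing where the root `e i + e j` does. -/
def rootLine (i j : Idx n) : Set ((Fin n → ℤ) →ₗ[ℤ] ℤ) :=
  {r | ∀ φ, root i j φ = 0 → r φ = 0}

/-- The positive integral combinations of two linear forms. -/
def openCone (r s : (Fin n → ℤ) →ₗ[ℤ] ℤ) : Set ((Fin n → ℤ) →ₗ[ℤ] ℤ) :=
  {t | ∃ a b : ℤ, 0 < a ∧ 0 < b ∧ t = a • r + b • s}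

theorem openCone_comm (r s : (Fin n → ℤ) →ₗ[ℤ] ℤ) : openCone r s = openCone s r := by
  ext t
  constructor <;> rintro ⟨a, b, ha, hb, rfl⟩ <;> exact ⟨b, a, hb, ha, add_comm _ _⟩

theorem exists_root_eq_zero_and_pos {i j k l : Idx n} (h : root k l ∉ rootLine i j) :
    ∃ φ, root i j φ = 0 ∧ 0 < root k l φ := by
  simp only [rootLine, Set.mem_ofPred_eq, not_forall] at h
  obtain ⟨φ, h0, hφ⟩ := h
  rcases lt_or_gt_of_ne hφ with h' | h'
  · exact ⟨-φ, by rw [map_neg, h0, neg_zero], by rwa [map_neg, neg_pos]⟩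
  · exact ⟨φ, h0, h'⟩

theorem rootLine_eq_of_mem {i j k l : Idx n} (hkl : k ≠ neg l) (h : root k l ∈ rootLine i j) :
    rootLine k l = rootLine i j := by
  suffices h' : root i j ∈ rootLine k l from
    Set.ext fun r => ⟨fun hr φ hφ => hr φ (h φ hφ), fun hr φ hφ => hr φ (h' φ hφ)⟩
  intro ψ hψ
  by_contra hne
  set χ : Fin n → ℤ := Pi.single k.1 1
  have hφ := h (root i j ψ • χ - root i j χ • ψ)
    (by simp only [map_sub, map_smul, smul_eq_mul]; ring)
  rw [map_sub, map_smul, map_smul, hψ, smul_zero, sub_zero, smul_eq_mul] at hφ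
  exact mul_ne_zero hne (root_single_ne_zero hkl) hφ

theorem root_notMem_rootLine {i j h l : Idx n} (hi : h.1 ≠ i.1) (hj : h.1 ≠ j.1)
    (hl : h ≠ neg l) : root h l ∉ rootLine i j := by
  intro hmem
  refine root_single_ne_zero hl (hmem _ ?_)
  rw [root_apply, Pi.single_eq_of_ne hi.symm, Pi.single_eq_of_ne hj.symm, mul_zero, mul_zero,
    add_zero]

theorem exists_fst_ne (hn : 3 ≤ n) (i j : Idx n) : ∃ h : Idx n, h.1 ≠ i.1 ∧ h.1 ≠ j.1 := by
  obtain ⟨m, hi, hj⟩ := Cardinal.exists_ne_ne_of_three_le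
    (α := Fin n) (by rw [Cardinal.mk_fin]; exact_mod_cast hn) i.1 j.1
  exact ⟨(m, true), hi, hj⟩

end Idx

namespace FormIdeal

variable {A : Type*} [Ring A] {D : FormRingData A} {n : ℕ}

theorem level_comm (F : FormIdeal D) (i j : Idx n) : F.level i j = F.level j i := by
  simp only [level, eq_comm]

end FormIdeal

/-! ## Steinberg families -/

section RootSets

variable {A : Type*} [Ring A] {D : FormRingData A} {n : ℕ} {H : Type*}

/-- The values at level `F` of a family `x i j a` indexed like the root elements, taken over the
roots `e i + e j` in `R`. -/
def rootSet (x : Idx n → Idx n → A → H) (F : FormIdeal D) (R : Set ((Fin n → ℤ) →ₗ[ℤ] ℤ)) :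
    Set H :=
  {h | ∃ i j a, i ≠ Idx.neg j ∧ Idx.root i j ∈ R ∧ a ∈ F.level i j ∧ x i j a = h}

theorem rootSet_mono (x : Idx n → Idx n → A → H) (F : FormIdeal D)
    {R S : Set ((Fin n → ℤ) →ₗ[ℤ] ℤ)} (h : R ⊆ S) : rootSet x F R ⊆ rootSet x F S := by
  rintro _ ⟨i, j, a, hij, hR, ha, rfl⟩
  exact ⟨i, j, a, hij, h hR, ha, rfl⟩

variable [Group H]

/-- The subgroup generated by the root elements of level `F` for the roots in `R`. -/
def rootSpan (x : Idx n → Idx n → A → H) (F : FormIdeal D) (R : Set ((Fin n → ℤ) →ₗ[ℤ] ℤ)) :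
    Subgroup H :=
  Subgroup.closure (rootSet x F R)

theorem rootSpan_mono (x : Idx n → Idx n → A → H) (F : FormIdeal D)
    {R S : Set ((Fin n → ℤ) →ₗ[ℤ] ℤ)} (h : R ⊆ S) : rootSpan x F R ≤ rootSpan x F S :=
  Subgroup.closure_mono (rootSet_mono x F h)

theorem rootSpan_le_top (x : Idx n → Idx n → A → H) (F : FormIdeal D)
    (R : Set ((Fin n → ℤ) →ₗ[ℤ] ℤ)) : rootSpan x F R ≤ rootSpan x (⊤ : FormIdeal D) R := by
  refine Subgroup.closure_mono ?_
  rintro _ ⟨i, j, a, hij, hR, ha, rfl⟩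
  exact ⟨i, j, a, hij, hR, F.level_le_top ha, rfl⟩

theorem mem_rootSpan {x : Idx n → Idx n → A → H} {F : FormIdeal D}
    {R : Set ((Fin n → ℤ) →ₗ[ℤ] ℤ)} {i j : Idx n} {a : A} (hij : i ≠ Idx.neg j)
    (hR : Idx.root i j ∈ R) (ha : a ∈ F.level i j) : x i j a ∈ rootSpan x F R :=
  Subgroup.subset_closure ⟨i, j, a, hij, hR, ha, rfl⟩

/-- The relative elementary subgroup of level `F`. -/
def relElem (x : Idx n → Idx n → A → H) (F : FormIdeal D) : Subgroup H :=
  Subgroup.normalClosure (rootSet x F Set.univ)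

instance (x : Idx n → Idx n → A → H) (F : FormIdeal D) : (relElem x F).Normal :=
  Subgroup.normalClosure_normal

/-- The unipotent subgroup of level `F` for the roots positive on `φ`. -/
def unipotent (x : Idx n → Idx n → A → H) (φ : Fin n → ℤ) (F : FormIdeal D) : Subgroup H :=
  rootSpan x F {r | 0 < r φ}

/-- A family of elements satisfying the relations among the elementary unitary transvections, and
generating the ambient group. Unlike the group of transvections itself, this notion is stable
under passing to quotients. -/
structure IsSteinbergFamily (D : FormRingData A) (x : Idx n → Idx n → A → H) : Prop where
  closure_eq_top : rootSpan x (⊤ : FormIdeal D) Set.univ = ⊤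
  map_add : ∀ {i j : Idx n}, i ≠ Idx.neg j → ∀ a ∈ (⊤ : FormIdeal D).level i j,
    ∀ b ∈ (⊤ : FormIdeal D).level i j, x i j (a + b) = x i j a * x i j b
  swap : ∀ {i j : Idx n}, i.1 ≠ j.1 → ∀ a, x i j a = x j i (-(D.lam * D.bar a))
  commute : ∀ {i j k l : Idx n}, i ≠ Idx.neg j → k ≠ Idx.neg l → k ≠ Idx.neg i →
    k ≠ Idx.neg j → l ≠ Idx.neg i → l ≠ Idx.neg j → ∀ a ∈ (⊤ : FormIdeal D).level i j,
    ∀ b ∈ (⊤ : FormIdeal D).level k l, Commute (x i j a) (x k l b)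
  commutator_short : ∀ {i j l : Idx n}, i.1 ≠ j.1 → l.1 ≠ j.1 → i.1 ≠ l.1 → ∀ a b,
    ⁅x i j a, x (Idx.neg j) l b⁆ = x i l (D.weight (Idx.neg j) * (a * b))
  commutator_short_long : ∀ {i j : Idx n}, i.1 ≠ j.1 → ∀ a b,
    ⁅x i j a, x (Idx.neg j) i b⁆ = x i i (D.weight (Idx.neg j) * (a * b) -
      D.lam * D.bar (D.weight (Idx.neg j) * (a * b)))
  commutator_long_short : ∀ {j l : Idx n}, l.1 ≠ j.1 → ∀ g ∈ D.Lambda, ∀ b,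
    ⁅x j j g, x (Idx.neg j) l b⁆ =
      x j l (D.weight (Idx.neg j) * (g * b)) * x l l (-(D.bar b * g * b))

end RootSets

namespace IsSteinbergFamily

open Idx FormIdeal

variable {A : Type*} [Ring A] {D : FormRingData A} {n : ℕ} {H : Type*} [Group H]
  {x : Idx n → Idx n → A → H} {F G K : FormIdeal D} {i j k l : Idx n} {a b : A}

theorem map_zero (hx : IsSteinbergFamily D x) (hij : i ≠ neg j) : x i j 0 = 1 := by
  have h := hx.map_add hij 0 (zero_mem _) 0 (zero_mem _)
  rwa [add_zero, left_eq_mul] at h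

theorem inv_eq (hx : IsSteinbergFamily D x) (hij : i ≠ neg j) (ha : a ∈ F.level i j) :
    (x i j a)⁻¹ = x i j (-a) := by
  rw [inv_eq_iff_mul_eq_one, ← hx.map_add hij a (F.level_le_top ha) (-a)
    (F.level_le_top (neg_mem ha)), add_neg_cancel, hx.map_zero hij]

theorem inv_mem_rootSet (hx : IsSteinbergFamily D x) {R : Set ((Fin n → ℤ) →ₗ[ℤ] ℤ)} :
    ∀ h ∈ rootSet x F R, h⁻¹ ∈ rootSet x F R := by
  rintro _ ⟨i, j, a, hij, hR, ha, rfl⟩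
  exact ⟨i, j, -a, hij, hR, neg_mem ha, (hx.inv_eq hij ha).symm⟩

theorem exists_swap (hx : IsSteinbergFamily D x) (hij : i ≠ neg j) (ha : a ∈ F.level i j) :
    ∃ a' ∈ F.level j i, x i j a = x j i a' := by
  by_cases h : i = j
  · subst h
    exact ⟨a, ha, rfl⟩
  · refine ⟨_, ?_, hx.swap (by grind [fst_eq_fst_iff]) a⟩
    rw [F.level_of_ne (Ne.symm h)]
    exact neg_mem (F.lam_mul_bar_mem (F.level_le_I ha))

/-! ### The Chevalley commutator formula -/

theorem commutator_long_short_mem (hx : IsSteinbergFamily D x) (hP : ProdLe F G K)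
    (hlj : l.1 ≠ j.1) (ha : a ∈ F.Gamma) (hb : b ∈ G.I) :
    ⁅x j j a, x (neg j) l b⁆ ∈ rootSpan x K (openCone (root j j) (root (neg j) l)) := by
  rw [hx.commutator_long_short hlj a (F.gamma_le_Lambda ha)]
  refine mul_mem (mem_rootSpan (by grind) ⟨1, 1, one_pos, one_pos, ?_⟩ ?_)
    (mem_rootSpan (neg_ne l).symm ⟨1, 2, one_pos, two_pos, ?_⟩ ?_)
  · rw [one_smul, one_smul, root_add_root]
  · rw [K.level_of_ne (by grind)]
    exact K.mul_mem_left _ _ (hP.mul_mem _ (F.gamma_le_I ha) _ hb)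
  · rw [one_smul, two_smul, ← add_assoc, root_add_root, root_comm j, ← Idx.neg_neg j, root_add_root]
  · rw [level_self]
    simpa only [D.bar_bar] using neg_mem (hP.conj_mem' _ (G.bar_mem _ hb) _ ha)

theorem commutator_mem_of_neg (hx : IsSteinbergFamily D x) (hP : ProdLe F G K)
    (hij : i ≠ neg j) (hlj : l ≠ j) (hli : l ≠ neg i) (ha : a ∈ F.level i j)
    (hb : b ∈ G.level (neg j) l) :
    ⁅x i j a, x (neg j) l b⁆ ∈ rootSpan x K (openCone (root i j) (root (neg j) l)) := by
  rcases eq_or_ne i j with rfl | hne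
  · rw [level_self] at ha
    exact hx.commutator_long_short_mem hP (by grind [fst_eq_fst_iff]) ha (G.level_le_I hb)
  have hij' : i.1 ≠ j.1 := by grind [fst_eq_fst_iff]
  rcases eq_or_ne l (neg j) with rfl | hlj'
  · obtain ⟨a', ha', haa'⟩ := hx.exists_swap hij ha
    rw [level_self] at hb
    have h := hx.commutator_long_short_mem hP.symm (j := neg j) hij' hb (F.level_le_I ha')
    rw [Idx.neg_neg, ← haa', root_comm j i, openCone_comm] at h
    rw [← commutatorElement_inv]
    exact inv_mem h
  have hmul : D.weight (neg j) * (a * b) ∈ K.I :=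
    K.mul_mem_left _ _ (hP.mul_mem _ (F.level_le_I ha) _ (G.level_le_I hb))
  have hroot : root i l ∈ openCone (root i j) (root (neg j) l) :=
    ⟨1, 1, one_pos, one_pos, by rw [one_smul, one_smul, root_add_root]⟩
  rcases eq_or_ne l i with rfl | hil
  · rw [hx.commutator_short_long hij']
    refine mem_rootSpan (neg_ne l).symm hroot ?_
    rw [level_self]
    exact K.sub_lam_mul_bar_mem hmul
  · rw [hx.commutator_short hij' (by grind [fst_eq_fst_iff]) (by grind [fst_eq_fst_iff])]
    refine mem_rootSpan (by grind) hroot ?_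
    rwa [K.level_of_ne hil.symm]

theorem commutator_mem_openCone (hx : IsSteinbergFamily D x) (hP : ProdLe F G K)
    (hij : i ≠ neg j) (hkl : k ≠ neg l) (hopp : root k l ≠ -root i j) (ha : a ∈ F.level i j)
    (hb : b ∈ G.level k l) :
    ⁅x i j a, x k l b⁆ ∈ rootSpan x K (openCone (root i j) (root k l)) := by
  have key {i j k l : Idx n} {a b : A} (hij : i ≠ neg j) (hkl : k ≠ neg l)
      (hopp : root k l ≠ -root i j) (ha : a ∈ F.level i j) (hb : b ∈ G.level k l)
      (hk : k = neg j) :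
      ⁅x i j a, x k l b⁆ ∈ rootSpan x K (openCone (root i j) (root k l)) := by
    subst hk
    refine hx.commutator_mem_of_neg hP hij (by grind) ?_ ha hb
    rintro rfl
    exact hopp (by rw [root_neg_neg, root_comm])
  obtain ⟨a', ha', haa'⟩ := hx.exists_swap hij ha
  obtain ⟨b', hb', hbb'⟩ := hx.exists_swap hkl hb
  have hji : j ≠ neg i := by grind
  have hlk : l ≠ neg k := by grind
  by_cases hkj : k = neg j
  · exact key hij hkl hopp ha hb hkj
  by_cases hki : k = neg i
  · rw [haa', root_comm i j] at *
    exact key hji hkl hopp ha' hb hki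
  by_cases hlj : l = neg j
  · rw [hbb', root_comm k l] at *
    exact key hij hlk hopp ha hb' hlj
  by_cases hli : l = neg i
  · rw [haa', hbb', root_comm i j, root_comm k l] at *
    exact key hji hlk hopp ha' hb' hli
  · rw [commutatorElement_eq_one_iff_commute.2 (hx.commute hij hkl hki hkj hli hlj a
      (F.level_le_top ha) b (G.level_le_top hb))]
    exact one_mem _

end IsSteinbergFamily

/-! ### Unipotent subgroups -/

theorem closure_le_normalizer_closure {H : Type*} [Group H] {S T : Set H}
    (hinv : ∀ s ∈ S, s⁻¹ ∈ S) (h : ∀ s ∈ S, ∀ t ∈ T, s * t * s⁻¹ ∈ Subgroup.closure T) :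
    Subgroup.closure S ≤ Subgroup.normalizer (Subgroup.closure T) := by
  have hconj (s) (hs : s ∈ S) :
      Subgroup.closure T ≤ (Subgroup.closure T).comap (MulAut.conj s).toMonoidHom :=
    (Subgroup.closure_le _).2 (h s hs)
  refine (Subgroup.closure_le _).2 fun s hs => Subgroup.mem_normalizer_iff.2 fun t =>
    ⟨fun ht => hconj s hs ht, fun ht => ?_⟩
  simpa [mul_assoc] using hconj s⁻¹ (hinv s hs) ht

theorem commutatorElement_mem_of_mem_closure {H : Type*} [Group H] {s : H} {T : Set H}
    {K : Subgroup H} (hT : Subgroup.closure T ≤ Subgroup.normalizer K)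
    (h : ∀ t ∈ T, ⁅s, t⁆ ∈ K) {t : H} (ht : t ∈ Subgroup.closure T) : ⁅s, t⁆ ∈ K := by
  rw [Subgroup.le_normalizer_iff] at hT
  induction ht using Subgroup.closure_induction with
  | mem t ht => exact h t ht
  | one => simp only [commutatorElement_one_right, one_mem]
  | mul t u ht _ iht ihu =>
    rw [commutatorElement_mul_right_eq_mul_conj, mul_assoc, mul_assoc, ← mul_assoc t]
    exact mul_mem iht (hT t ht _ ihu)
  | inv t ht iht =>
    rw [commutatorElement_inv_right, ← commutatorElement_inv]
    simpa only [inv_inv] using hT t⁻¹ (inv_mem ht) _ (inv_mem iht)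

namespace IsSteinbergFamily

open Idx FormIdeal

variable {A : Type*} [Ring A] {D : FormRingData A} {n : ℕ} {H : Type*} [Group H]
  {x : Idx n → Idx n → A → H} {F G K : FormIdeal D} {i j k l : Idx n} {a b : A} {φ : Fin n → ℤ}

theorem commutator_mem_unipotent (hx : IsSteinbergFamily D x) (hP : ProdLe F G K)
    (hij : i ≠ neg j) (hkl : k ≠ neg l) (ha : a ∈ F.level i j) (hb : b ∈ G.level k l)
    (h₀ : 0 ≤ root i j φ) (h₁ : 0 < root k l φ) : ⁅x i j a, x k l b⁆ ∈ unipotent x φ K := by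
  refine rootSpan_mono x K ?_ (hx.commutator_mem_openCone hP hij hkl ?_ ha hb)
  · rintro _ ⟨s, t, hs, ht, rfl⟩
    simp only [Set.mem_ofPred_eq, LinearMap.add_apply, LinearMap.smul_apply, smul_eq_mul]
    positivity
  · intro h
    rw [h, LinearMap.neg_apply] at h₁
    lia

theorem rootSpan_nonneg_le_normalizer (hx : IsSteinbergFamily D x) (F : FormIdeal D)
    (φ : Fin n → ℤ) :
    rootSpan x (⊤ : FormIdeal D) {r | 0 ≤ r φ} ≤ Subgroup.normalizer (unipotent x φ F) := by
  refine closure_le_normalizer_closure hx.inv_mem_rootSet ?_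
  rintro _ ⟨i, j, a, hij, h₀, ha, rfl⟩ _ ⟨k, l, b, hkl, h₁, hb, rfl⟩
  rw [← MulAut.conj_apply, conj_eq_commutatorElement_mul]
  exact mul_mem (hx.commutator_mem_unipotent F.prodLe_top hij hkl ha hb h₀ h₁)
    (mem_rootSpan hkl h₁ hb)

theorem commutator_mem_unipotent_of_mem (hx : IsSteinbergFamily D x) (hP : ProdLe F G K)
    (hij : i ≠ neg j) (ha : a ∈ F.level i j) (h₀ : 0 ≤ root i j φ) {v : H}
    (hv : v ∈ unipotent x φ G) : ⁅x i j a, v⁆ ∈ unipotent x φ K := by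
  refine commutatorElement_mem_of_mem_closure (((rootSpan_le_top x G _).trans
    (rootSpan_mono x _ fun r hr => ?_)).trans (hx.rootSpan_nonneg_le_normalizer K φ)) ?_ hv
  · exact (show 0 < r φ from hr).le
  · rintro _ ⟨k, l, b, hkl, h₁, hb, rfl⟩
    exact hx.commutator_mem_unipotent hP hij hkl ha hb h₀ h₁

theorem conj_mem_unipotent (hx : IsSteinbergFamily D x) (h₀ : root i j φ = 0) {g v : H}
    (hg : g ∈ rootSpan x (⊤ : FormIdeal D) (rootLine i j)) (hv : v ∈ unipotent x φ F) :
    g * v * g⁻¹ ∈ unipotent x φ F :=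
  Subgroup.le_normalizer_iff.1 (hx.rootSpan_nonneg_le_normalizer F φ) g
    (rootSpan_mono x _ (fun _ hr => (hr φ h₀).ge) hg) v hv

/-- The conjugates of the root elements of level `F` by the rank one subgroups of their roots. -/
def rankOneConj (x : Idx n → Idx n → A → H) (F : FormIdeal D) : Set H :=
  {h | ∃ i j b g, i ≠ neg j ∧ b ∈ F.level i j ∧
    g ∈ rootSpan x (⊤ : FormIdeal D) (rootLine i j) ∧ g * x i j b * g⁻¹ = h}

theorem rootSpan_le_closure_rankOneConj (x : Idx n → Idx n → A → H) (F : FormIdeal D)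
    (R : Set ((Fin n → ℤ) →ₗ[ℤ] ℤ)) : rootSpan x F R ≤ Subgroup.closure (rankOneConj x F) := by
  refine Subgroup.closure_mono ?_
  rintro _ ⟨i, j, b, hij, -, hb, rfl⟩
  exact ⟨i, j, b, 1, hij, hb, one_mem _, by simp only [one_mul, inv_one, mul_one]⟩

theorem conj_mem_closure_rankOneConj (hx : IsSteinbergFamily D x) {d : A} {h : H}
    (hkl : k ≠ neg l) (hd : d ∈ (⊤ : FormIdeal D).level k l) (hh : h ∈ rankOneConj x F) :
    x k l d * h * (x k l d)⁻¹ ∈ Subgroup.closure (rankOneConj x F) := by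
  have hmem := Subgroup.subset_closure hh
  obtain ⟨i, j, b, g, hij, hb, hg, rfl⟩ := hh
  by_cases hline : root k l ∈ rootLine i j
  · refine Subgroup.subset_closure
      ⟨i, j, b, x k l d * g, hij, hb, mul_mem (mem_rootSpan hkl hline hd) hg, ?_⟩
    group
  obtain ⟨φ, h₀, h₁⟩ := exists_root_eq_zero_and_pos hline
  have hy := hx.conj_mem_unipotent h₀ (inv_mem hg) (mem_rootSpan (x := x) hkl h₁ hd)
  have hcomm := hx.conj_mem_unipotent h₀ hg
    (inv_mem (hx.commutator_mem_unipotent_of_mem F.prodLe_top.symm hij hb h₀.ge hy))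
  rw [commutatorElement_inv, conjugate_commutatorElement] at hcomm
  rw [← MulAut.conj_apply, conj_eq_commutatorElement_mul]
  refine mul_mem (rootSpan_le_closure_rankOneConj x F {r | 0 < r φ} ?_) hmem
  rwa [show x k l d = g * (g⁻¹ * x k l d * g⁻¹⁻¹) * g⁻¹ by group]

theorem relElem_le_closure_rankOneConj (hx : IsSteinbergFamily D x) (F : FormIdeal D) :
    relElem x F ≤ Subgroup.closure (rankOneConj x F) := by
  have : (Subgroup.closure (rankOneConj x F)).Normal := by
    rw [← Subgroup.normalizer_eq_top_iff, eq_top_iff, ← hx.closure_eq_top]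
    refine closure_le_normalizer_closure hx.inv_mem_rootSet ?_
    rintro _ ⟨k, l, d, hkl, -, hd, rfl⟩ h hh
    exact hx.conj_mem_closure_rankOneConj hkl hd hh
  exact Subgroup.normalClosure_le_normal
    (Subgroup.subset_closure.trans (rootSpan_le_closure_rankOneConj x F _))

end IsSteinbergFamily

/-! ### Elementary commutators -/

theorem commute_commutatorElement {H : Type*} [Group H] {a y z : H}
    (ha : Commute a ⁅y⁻¹, z⁻¹⁆) (hy : Commute y ⁅a⁻¹, z⁆) : Commute ⁅a, y⁆ z := by
  obtain ⟨m, hm⟩ : ∃ m, m = ⁅y⁻¹, z⁻¹⁆⁻¹ := ⟨_, rfl⟩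
  obtain ⟨l, hl⟩ : ∃ l, l = ⁅a⁻¹, z⁆ := ⟨_, rfl⟩
  have hzm : y⁻¹ * z = z * m * y⁻¹ := by rw [hm, commutatorElement_def]; group
  have hlz : a⁻¹ * z = l * z * a⁻¹ := by rw [hl, commutatorElement_def]; group
  have ham : a⁻¹ * m = m * a⁻¹ := (hm ▸ ha.inv_right).inv_left
  have hyl : y * l = l * y := hl ▸ hy
  change ⁅a, y⁆ * z = z * ⁅a, y⁆
  calc ⁅a, y⁆ * z = a * y * a⁻¹ * (y⁻¹ * z) := by rw [commutatorElement_def]; group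
    _ = a * y * (a⁻¹ * z) * m * y⁻¹ := by rw [hzm]; group
    _ = a * (y * l) * z * (a⁻¹ * m) * y⁻¹ := by rw [hlz]; group
    _ = a * l * y * (z * m * y⁻¹) * y * a⁻¹ * y⁻¹ := by rw [hyl, ham]; group
    _ = a * (l * z * a⁻¹) * a * y * a⁻¹ * y⁻¹ := by rw [← hzm]; group
    _ = z * ⁅a, y⁆ := by rw [← hlz, commutatorElement_def]; group

namespace IsSteinbergFamily

open Idx FormIdeal

variable {A : Type*} [Ring A] {D : FormRingData A} {n : ℕ} {H : Type*} [Group H]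
  {x : Idx n → Idx n → A → H} {F G K : FormIdeal D} {i j k l : Idx n} {a b : A}
  {φ : Fin n → ℤ}

theorem commutator_short_bar_weight (hx : IsSteinbergFamily D x) (hij : i.1 ≠ j.1)
    (hlj : l.1 ≠ j.1) (hil : i.1 ≠ l.1) (a b : A) :
    ⁅x i j (D.bar (D.weight (neg j)) * a), x (neg j) l b⁆ = x i l (a * b) := by
  rw [hx.commutator_short hij hlj hil, mul_assoc, ← mul_assoc, D.weight_mul_bar_weight, one_mul]

theorem eq_mul_commutator_long (hx : IsSteinbergFamily D x) (hji : j.1 ≠ i.1)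
    (ha : a ∈ D.Lambda) :
    x i i a = x j i (D.weight (neg j) * a) * ⁅x j j (-a), x (neg j) i 1⁆ := by
  rw [hx.commutator_long_short hji.symm _ (neg_mem ha), ← mul_assoc,
    ← hx.map_add (by grind) _ (mem_level_top (by grind) _) _ (mem_level_top (by grind) _),
    D.bar_one, one_mul, mul_one, mul_neg, add_neg_cancel, hx.map_zero (by grind), one_mul,
    _root_.neg_neg]

theorem exists_eq_mul_commutator (hx : IsSteinbergFamily D x) (hn : 3 ≤ n) (hij : i ≠ neg j)
    (hb : b ∈ F.level i j) :
    ∃ u ∈ rootSet x F (rootLine i j)ᶜ, ∃ v ∈ rootSet x F (rootLine i j)ᶜ,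
      ∃ w ∈ rootSet x (⊤ : FormIdeal D) (rootLine i j)ᶜ, x i j b = u * ⁅v, w⁆ := by
  obtain ⟨h, hi, hj⟩ := exists_fst_ne hn i j
  have hmem {L : FormIdeal D} {k l : Idx n} {c : A} (hk : k.1 ≠ i.1) (hk' : k.1 ≠ j.1)
      (hkl : k ≠ neg l) (hc : c ∈ L.level k l) : x k l c ∈ rootSet x L (rootLine i j)ᶜ :=
    ⟨k, l, c, hkl, root_notMem_rootLine hk hk' hkl, hc, rfl⟩
  have hw : x (neg h) j 1 ∈ rootSet x (⊤ : FormIdeal D) (rootLine i j)ᶜ :=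
    hmem hi hj (by grind) (mem_level_top (by grind) 1)
  rcases eq_or_ne i j with rfl | hne
  · rw [level_self] at hb
    refine ⟨x h i (D.weight (neg h) * b), hmem hi hj (by grind) ?_, x h h (-b),
      hmem hi hj (neg_ne h).symm ?_, x (neg h) i 1, hw, ?_⟩
    · rw [F.level_of_ne (by grind)]
      exact F.mul_mem_left _ _ (F.gamma_le_I hb)
    · rw [level_self]
      exact neg_mem hb
    · exact hx.eq_mul_commutator_long hi (F.gamma_le_Lambda hb)
  · rw [F.level_of_ne hne] at hb
    have hv : D.bar (D.weight (neg h)) * b ∈ F.level h i := by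
      rw [F.level_of_ne (by grind)]
      exact F.mul_mem_left _ _ hb
    have hih (c : A) (hc : c ∈ F.level h i) : x i h c ∈ rootSet x F (rootLine i j)ᶜ :=
      ⟨i, h, c, by grind, root_comm h i ▸ root_notMem_rootLine hi hj (by grind),
        F.level_comm h i ▸ hc, rfl⟩
    refine ⟨x i h 0, hih _ (zero_mem _), _, hih _ hv, _, hw, ?_⟩
    rw [hx.map_zero (by grind), one_mul, hx.commutator_short_bar_weight (by grind) (by grind)
      (by grind [fst_eq_fst_iff]), mul_one]

theorem exists_mem_unipotent {z : H} (hz : z ∈ rootSet x F (rootLine i j)ᶜ) :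
    ∃ φ, root i j φ = 0 ∧ z ∈ unipotent x φ F := by
  obtain ⟨k, l, a, hkl, hline, ha, rfl⟩ := hz
  obtain ⟨φ, h₀, h₁⟩ := exists_root_eq_zero_and_pos hline
  exact ⟨φ, h₀, mem_rootSpan hkl h₁ ha⟩

theorem conj_mem_rootSpan (hx : IsSteinbergFamily D x) (hij : i ≠ neg j) (ha : a ∈ F.level i j)
    (h₀ : 0 ≤ root i j φ) {w : H} (hw : w ∈ unipotent x φ (⊤ : FormIdeal D)) :
    w * x i j a * w⁻¹ ∈ rootSpan x F Set.univ := by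
  rw [← MulAut.conj_apply, conj_eq_commutatorElement_mul, ← commutatorElement_inv]
  exact mul_mem (inv_mem (rootSpan_mono x F (Set.subset_univ _)
    (hx.commutator_mem_unipotent_of_mem F.prodLe_top.symm hij ha h₀ hw)))
    (mem_rootSpan hij (Set.mem_univ _) ha)

theorem commute_conj_of_notMem (hx : IsSteinbergFamily D x)
    (hFG : ∀ u ∈ rootSpan x F Set.univ, ∀ v ∈ rootSpan x G Set.univ, Commute u v)
    (hkl : k ≠ neg l) (hij : i ≠ neg j) (ha : a ∈ F.level k l) (hb : b ∈ G.level i j) {g : H}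
    (hg : g ∈ rootSpan x (⊤ : FormIdeal D) (rootLine i j)) (h : root k l ∉ rootLine i j) :
    Commute (x k l a) (g * x i j b * g⁻¹) := by
  obtain ⟨φ, h₀, h₁⟩ := exists_root_eq_zero_and_pos h
  have hu := hx.conj_mem_unipotent h₀ (inv_mem hg) (mem_rootSpan (x := x) hkl h₁ ha)
  have hcomm := (Commute.conj_iff g).2 (hFG _ (rootSpan_mono x F (Set.subset_univ _) hu) _
    (mem_rootSpan hij (Set.mem_univ _) hb))
  rwa [show g * (g⁻¹ * x k l a * g⁻¹⁻¹) * g⁻¹ = x k l a by group] at hcomm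

theorem commute_conj_of_mem (hx : IsSteinbergFamily D x) (hn : 3 ≤ n)
    (hFG : ∀ u ∈ rootSpan x F Set.univ, ∀ v ∈ rootSpan x G Set.univ, Commute u v)
    (hkl : k ≠ neg l) (hij : i ≠ neg j) (ha : a ∈ F.level k l) (hb : b ∈ G.level i j) {g : H}
    (hg : g ∈ rootSpan x (⊤ : FormIdeal D) (rootLine i j)) (h : root k l ∈ rootLine i j) :
    Commute (x k l a) (g * x i j b * g⁻¹) := by
  obtain ⟨u, hu, v, hv, w, hw, hbuvw⟩ := hx.exists_eq_mul_commutator hn hij hb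
  have hconj {z : H} (hz : z ∈ rootSet x G (rootLine i j)ᶜ) :
      g * z * g⁻¹ ∈ rootSpan x G Set.univ := by
    obtain ⟨φ, h₀, hφ⟩ := exists_mem_unipotent hz
    exact rootSpan_mono x G (Set.subset_univ _) (hx.conj_mem_unipotent h₀ hg hφ)
  have hxa := mem_rootSpan (x := x) hkl (Set.mem_univ _) ha
  obtain ⟨φ, h₀, hφ⟩ := exists_mem_unipotent hw
  have hwF := hx.conj_mem_rootSpan hkl ha (h φ h₀).ge
    (inv_mem (hx.conj_mem_unipotent h₀ hg hφ))
  have hvw := (Commute.conj_iff (g * w * g⁻¹)).2 (hFG _ hwF _ (inv_mem (hconj hv)))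
  rw [show g * w * g⁻¹ * ((g * w * g⁻¹)⁻¹ * x k l a * (g * w * g⁻¹)⁻¹⁻¹) * (g * w * g⁻¹)⁻¹ =
    x k l a by group] at hvw
  rw [hbuvw, show g * (u * ⁅v, w⁆) * g⁻¹ = g * u * g⁻¹ * (g * v * g⁻¹ *
    (g * w * g⁻¹ * (g * v * g⁻¹)⁻¹ * (g * w * g⁻¹)⁻¹)) by rw [commutatorElement_def]; group]
  exact (hFG _ hxa _ (hconj hu)).mul_right ((hFG _ hxa _ (hconj hv)).mul_right hvw)

theorem commutator_relElem_eq_bot (hx : IsSteinbergFamily D x) (hn : 3 ≤ n)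
    (hFG : ∀ u ∈ rootSpan x F Set.univ, ∀ v ∈ rootSpan x G Set.univ, Commute u v) :
    ⁅relElem x F, relElem x G⁆ = ⊥ := by
  rw [Subgroup.commutator_eq_bot_iff_le_centralizer]
  refine Subgroup.normalClosure_le_normal ?_
  rintro _ ⟨k, l, a, hkl, -, ha, rfl⟩
  refine Subgroup.centralizer_le (hx.relElem_le_closure_rankOneConj G) ?_
  rw [Subgroup.centralizer_closure]
  rintro _ ⟨i, j, b, g, hij, hb, hg, rfl⟩
  by_cases hline : root k l ∈ rootLine i j
  · exact (hx.commute_conj_of_mem hn hFG hkl hij ha hb hg hline).symm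
  · exact (hx.commute_conj_of_notMem hFG hkl hij ha hb hg hline).symm

theorem commute_of_rootSpan_eq_bot (hx : IsSteinbergFamily D x) (hP : ProdLe F G K)
    (hK : rootSpan x K Set.univ = ⊥) (hij : i ≠ neg j) (hkl : k ≠ neg l)
    (hopp : root k l ≠ -root i j) (ha : a ∈ F.level i j) (hb : b ∈ G.level k l) :
    Commute (x i j a) (x k l b) := by
  rw [← commutatorElement_eq_one_iff_commute, ← Subgroup.mem_bot, ← hK]
  exact rootSpan_mono x K (Set.subset_univ _) (hx.commutator_mem_openCone hP hij hkl hopp ha hb)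

theorem commute_of_mem_unipotent (hx : IsSteinbergFamily D x) (hP : ProdLe F G K)
    (hK : rootSpan x K Set.univ = ⊥) (hij : i ≠ neg j) (ha : a ∈ F.level i j)
    (h₀ : root i j φ = 0) {v : H} (hv : v ∈ unipotent x φ G) : Commute (x i j a) v := by
  rw [← commutatorElement_eq_one_iff_commute, ← Subgroup.mem_bot, ← hK]
  exact rootSpan_mono x K (Set.subset_univ _)
    (hx.commutator_mem_unipotent_of_mem hP hij ha h₀.ge hv)

theorem commute_commutatorElement_of_notMem (hx : IsSteinbergFamily D x) (hP : ProdLe F G K)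
    (hK : rootSpan x K Set.univ = ⊥) (hij : i ≠ neg j) (ha : a ∈ F.level i j)
    (hb : b ∈ G.level (neg j) (neg i)) {z : H}
    (hz : z ∈ rootSet x (⊤ : FormIdeal D) (rootLine i j)ᶜ) :
    Commute ⁅x i j a, x (neg j) (neg i) b⁆ z := by
  obtain ⟨φ, h₀, hφ⟩ := exists_mem_unipotent hz
  have hij' : neg j ≠ neg (neg i) := by grind
  have h₀' : root (neg j) (neg i) φ = 0 := by
    rw [root_neg_neg, root_comm, LinearMap.neg_apply, h₀, neg_zero]
  refine commute_commutatorElement ?_ ?_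
  · refine hx.commute_of_mem_unipotent hP hK hij ha h₀ ?_
    rw [hx.inv_eq hij' hb]
    exact hx.commutator_mem_unipotent_of_mem G.prodLe_top.symm hij' (neg_mem hb) h₀'.ge
      (inv_mem hφ)
  · refine hx.commute_of_mem_unipotent hP.symm hK hij' hb h₀' ?_
    rw [hx.inv_eq hij ha]
    exact hx.commutator_mem_unipotent_of_mem F.prodLe_top.symm hij (neg_mem ha) h₀.ge hφ

theorem commutatorElement_mem_center (hx : IsSteinbergFamily D x) (hn : 3 ≤ n)
    (hP : ProdLe F G K) (hK : rootSpan x K Set.univ = ⊥) (hij : i ≠ neg j)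
    (ha : a ∈ F.level i j) (hb : b ∈ G.level (neg j) (neg i)) :
    ⁅x i j a, x (neg j) (neg i) b⁆ ∈ Subgroup.center H := by
  rw [← Subgroup.centralizer_univ, ← Subgroup.coe_top, ← hx.closure_eq_top, rootSpan,
    Subgroup.centralizer_closure]
  have hcomm {z : H} := hx.commute_commutatorElement_of_notMem hP hK hij ha hb (z := z)
  rintro _ ⟨k, l, c, hkl, -, hc, rfl⟩
  by_cases hline : root k l ∈ rootLine i j
  · obtain ⟨u, hu, v, hv, w, hw, huvw⟩ := hx.exists_eq_mul_commutator hn hkl hc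
    rw [rootLine_eq_of_mem hkl hline] at hu hv hw
    rw [huvw, commutatorElement_def]
    exact ((hcomm hu).mul_right ((((hcomm hv).mul_right (hcomm hw)).mul_right
      (hcomm hv).inv_right).mul_right (hcomm hw).inv_right)).symm
  · exact (hcomm ⟨k, l, c, hkl, hline, hc, rfl⟩).symm

end IsSteinbergFamily

theorem commutatorElement_mul_commutatorElement_mul {H : Type*} [Group H] {u u₁ u₂ v y : H}
    (h₁ : Commute y u₁) (h₂ : Commute y u₂) (hu : Commute y u)
    (hc : ⁅u, ⁅v⁻¹, y⁆⁆ ∈ Subgroup.center H) :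
    ⁅u₁ * ⁅u, v⁆ * u₂, y⁆ = ⁅u, ⁅v⁻¹, y⁆⁆⁻¹ := by
  obtain ⟨c, hcdef⟩ : ∃ c, c = ⁅u, ⁅v⁻¹, y⁆⁆ := ⟨_, rfl⟩
  have hcomm (g : H) : g * c = c * g := Subgroup.mem_center_iff.1 (hcdef ▸ hc) g
  have hv : y * v * y⁻¹ = v * ⁅v⁻¹, y⁆ := by rw [commutatorElement_def]; group
  have huv : ⁅u, v * ⁅v⁻¹, y⁆⁆ = ⁅u, v⁆ * c := by
    rw [commutatorElement_mul_right_eq_mul_conj, ← hcdef, mul_assoc ⁅u, v⁆, hcomm v, mul_assoc,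
      mul_assoc, mul_inv_cancel, mul_one]
  have hconj : y * (u₁ * ⁅u, v⁆ * u₂) * y⁻¹ = u₁ * ⁅u, v⁆ * u₂ * c :=
    calc y * (u₁ * ⁅u, v⁆ * u₂) * y⁻¹
        = (y * u₁ * y⁻¹) * (y * ⁅u, v⁆ * y⁻¹) * (y * u₂ * y⁻¹) := by group
      _ = u₁ * ⁅u, y * v * y⁻¹⁆ * u₂ := by
          rw [h₁.mul_inv_cancel, h₂.mul_inv_cancel, conjugate_commutatorElement,
            hu.mul_inv_cancel]
      _ = u₁ * ⁅u, v⁆ * u₂ * c := by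
          rw [hv, huv, ← mul_assoc, mul_assoc _ c, ← hcomm u₂, ← mul_assoc]
  rw [← hcdef, ← commutatorElement_inv, commutatorElement_def, hconj, hcomm,
    mul_inv_cancel_right]

section ElemComm

variable {A : Type*} [Ring A] {D : FormRingData A} {n : ℕ} {H : Type*} [Group H]

/-- The subgroup generated by the elementary commutators of levels `F` and `G` for the root
`e i + e j` and its opposite. -/
def elemComm (x : Idx n → Idx n → A → H) (F G : FormIdeal D) (i j : Idx n) : Subgroup H :=
  Subgroup.closure {h | ∃ a ∈ F.level i j, ∃ b ∈ G.level (Idx.neg j) (Idx.neg i),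
    ⁅x i j a, x (Idx.neg j) (Idx.neg i) b⁆ = h}

theorem commutatorElement_mem_elemComm (x : Idx n → Idx n → A → H) {F G : FormIdeal D}
    {i j : Idx n} {a b : A} (ha : a ∈ F.level i j) (hb : b ∈ G.level (Idx.neg j) (Idx.neg i)) :
    ⁅x i j a, x (Idx.neg j) (Idx.neg i) b⁆ ∈ elemComm x F G i j :=
  Subgroup.subset_closure ⟨a, ha, b, hb, rfl⟩

theorem elemComm_le_iff {x : Idx n → Idx n → A → H} {F G : FormIdeal D} {i j : Idx n}
    {R : Subgroup H} : elemComm x F G i j ≤ R ↔ ∀ a ∈ F.level i j,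
      ∀ b ∈ G.level (Idx.neg j) (Idx.neg i), ⁅x i j a, x (Idx.neg j) (Idx.neg i) b⁆ ∈ R := by
  rw [elemComm, Subgroup.closure_le]
  refine ⟨fun h a ha b hb => h ⟨a, ha, b, hb, rfl⟩, ?_⟩
  rintro h _ ⟨a, ha, b, hb, rfl⟩
  exact h a ha b hb

theorem elemComm_le_elemComm_neg (x : Idx n → Idx n → A → H) (F G : FormIdeal D) (i j : Idx n) :
    elemComm x F G i j ≤ elemComm x G F (Idx.neg j) (Idx.neg i) := by
  refine elemComm_le_iff.2 fun a ha b hb => ?_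
  rw [← commutatorElement_inv]
  refine inv_mem (Subgroup.subset_closure ⟨b, hb, a, ?_, ?_⟩) <;> simp only [Idx.neg_neg, ha]

end ElemComm

namespace IsSteinbergFamily

open Idx FormIdeal

variable {A : Type*} [Ring A] {D : FormRingData A} {n : ℕ} {H : Type*} [Group H]
  {x : Idx n → Idx n → A → H} {F G K : FormIdeal D} {i j k l h p q : Idx n} {a b : A}

theorem elemComm_swap (hx : IsSteinbergFamily D x) (F G : FormIdeal D) (hij : i ≠ neg j) :
    elemComm x F G i j ≤ elemComm x F G j i := by
  refine elemComm_le_iff.2 fun a ha b hb => ?_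
  obtain ⟨a', ha', haa'⟩ := hx.exists_swap hij ha
  obtain ⟨b', hb', hbb'⟩ := hx.exists_swap (by grind) hb
  rw [haa', hbb']
  exact commutatorElement_mem_elemComm x ha' hb'

theorem commute_of_fst_ne (hx : IsSteinbergFamily D x) (hP : ProdLe F G K)
    (hK : rootSpan x K Set.univ = ⊥) (hij : i ≠ neg j) (hkl : k ≠ neg l)
    (h : k.1 ≠ i.1 ∧ k.1 ≠ j.1 ∨ l.1 ≠ i.1 ∧ l.1 ≠ j.1) (ha : a ∈ F.level i j)
    (hb : b ∈ G.level k l) : Commute (x i j a) (x k l b) := by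
  have hline : root k l ∉ rootLine i j := by
    rcases h with ⟨hki, hkj⟩ | ⟨hli, hlj⟩
    · exact root_notMem_rootLine hki hkj hkl
    · exact root_comm l k ▸ root_notMem_rootLine hli hlj (by grind)
  refine hx.commute_of_rootSpan_eq_bot hP hK hij hkl (fun h => hline fun φ hφ => ?_) ha hb
  rw [h, LinearMap.neg_apply, hφ, neg_zero]

theorem elemComm_short_le (hx : IsSteinbergFamily D x) (hn : 3 ≤ n) (hP : ProdLe F G K)
    (hK : rootSpan x K Set.univ = ⊥) (hij : i.1 ≠ j.1) (hhi : h.1 ≠ i.1) (hhj : h.1 ≠ j.1) :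
    elemComm x F G i j ≤ elemComm x F G i h := by
  refine elemComm_le_iff.2 fun a ha b hb => ?_
  have ha' : D.bar (D.weight (neg h)) * a ∈ F.level i h := by
    rw [F.level_of_ne (by grind)]
    exact F.mul_mem_left _ _ (F.level_le_I ha)
  have hb' : D.weight (neg j) * (-1 * b) ∈ G.level (neg h) (neg i) := by
    rw [G.level_of_ne (by grind)]
    exact G.mul_mem_left _ _ (G.mul_mem_left _ _ (G.level_le_I hb))
  have hm : ⁅(x (neg h) j 1)⁻¹, x (neg j) (neg i) b⁆ =
      x (neg h) (neg i) (D.weight (neg j) * (-1 * b)) := by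
    rw [hx.inv_eq (F := ⊤) (by grind) (mem_level_top (by grind) 1),
      hx.commutator_short (i := neg h) (l := neg i) hhj hij hhi]
  have hmem := commutatorElement_mem_elemComm x ha' hb'
  have hcenter := hx.commutatorElement_mem_center hn hP hK (by grind) ha' hb'
  rw [← hm] at hmem hcenter
  have hcomm : Commute (x (neg j) (neg i) b) (x i h (D.bar (D.weight (neg h)) * a)) :=
    hx.commute_of_fst_ne hP.symm hK (by grind) (by grind) (by grind) hb ha'
  have key := commutatorElement_mul_commutatorElement_mul (Commute.one_right _)
    (Commute.one_right _) hcomm hcenter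
  rw [one_mul, mul_one, hx.commutator_short_bar_weight hhi.symm hhj.symm hij, mul_one] at key
  rw [key]
  exact inv_mem hmem

theorem exists_commutator_inv_long (hx : IsSteinbergFamily D x) (hhi : h.1 ≠ i.1)
    (hb : b ∈ G.level (neg i) (neg i)) :
    ∃ q ∈ G.level (neg h) (neg h), ∃ p ∈ G.level (neg i) (neg h),
      ⁅(x (neg h) i 1)⁻¹, x (neg i) (neg i) b⁆ =
        x (neg h) (neg h) q * (x (neg i) (neg h) p)⁻¹ := by
  rw [level_self] at hb
  obtain ⟨c, -, hc⟩ := hx.exists_swap (F := ⊤) (i := neg h) (j := i) (by grind)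
    (mem_level_top (by grind) (-1))
  have hq : D.bar c * b * c ∈ G.level (neg h) (neg h) := by
    rw [level_self]
    simpa only [D.bar_bar] using G.gamma_conj (D.bar c) b hb
  have hp : D.weight i * (b * c) ∈ G.level (neg i) (neg h) := by
    rw [G.level_of_ne (by grind)]
    exact G.mul_mem_left _ _ (G.mul_mem_right _ _ (G.gamma_le_I hb))
  refine ⟨_, hq, _, hp, ?_⟩
  have hcomm := hx.commutator_long_short (j := neg i) (l := neg h) hhi b (G.gamma_le_Lambda hb) c
  rw [Idx.neg_neg, ← hx.inv_eq (neg_ne _).symm hq] at hcomm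
  rw [hx.inv_eq (F := ⊤) (by grind) (mem_level_top (by grind) 1), hc, ← commutatorElement_inv,
    hcomm, _root_.mul_inv_rev, inv_inv]

theorem elemComm_long_le (hx : IsSteinbergFamily D x) (hn : 3 ≤ n) (hP : ProdLe F G K)
    (hK : rootSpan x K Set.univ = ⊥) (hhi : h.1 ≠ i.1) :
    elemComm x F G i i ≤ elemComm x F G h h := by
  refine elemComm_le_iff.2 fun a ha b hb => ?_
  have hu : -a ∈ F.level h h := neg_mem (by rwa [level_self] at ha ⊢)
  have hu₁ : D.weight (neg h) * a ∈ F.level h i := by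
    rw [F.level_of_ne (by grind)]
    exact F.mul_mem_left _ _ (F.level_le_I ha)
  obtain ⟨q, hq, p, hp, hpq⟩ := hx.exists_commutator_inv_long hhi hb
  have hup : Commute (x h h (-a)) (x (neg i) (neg h) p)⁻¹ :=
    (hx.commute_of_fst_ne hP hK (by grind) (by grind) (by grind) hu hp).inv_right
  have huq : ⁅x h h (-a), ⁅(x (neg h) i 1)⁻¹, x (neg i) (neg i) b⁆⁆ =
      ⁅x h h (-a), x (neg h) (neg h) q⁆ := by
    rw [hpq, commutatorElement_mul_right_eq_mul_conj, commutatorElement_eq_one_iff_commute.2 hup,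
      mul_one, mul_inv_cancel_right]
  have key := commutatorElement_mul_commutatorElement_mul (v := x (neg h) i 1)
    (hx.commute_of_fst_ne hP.symm hK (by grind) (by grind) (by grind) hb hu₁)
    (Commute.one_right _)
    (hx.commute_of_fst_ne hP.symm hK (by grind) (by grind) (by grind) hb hu)
    (huq ▸ hx.commutatorElement_mem_center hn hP hK (by grind) hu hq)
  have haΛ : a ∈ D.Lambda := F.gamma_le_Lambda (by rwa [level_self] at ha)
  rw [mul_one, ← hx.eq_mul_commutator_long hhi haΛ, huq] at key
  rw [key]
  exact inv_mem (commutatorElement_mem_elemComm x hu hq)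

theorem elemComm_short_le_long (hx : IsSteinbergFamily D x) (hn : 3 ≤ n) (hP : ProdLe F G K)
    (hK : rootSpan x K Set.univ = ⊥) (hF : F.Gamma = F.I) (hij : i.1 ≠ j.1) :
    elemComm x F G j i ≤ elemComm x F G j j := by
  refine elemComm_le_iff.2 fun a ha b hb => ?_
  obtain ⟨g, hg⟩ : ∃ g, g = D.bar (D.weight (neg j)) * a := ⟨_, rfl⟩
  have hgΓ : g ∈ F.Gamma := by
    rw [hF, hg]
    exact F.mul_mem_left _ _ (F.level_le_I ha)
  have hgi : g ∈ F.level i i := by rwa [level_self]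
  have hgj : g ∈ F.level j j := by rwa [level_self]
  have ht : x j i a = ⁅x j j g, x (neg j) i 1⁆ * x i i g := by
    rw [hx.commutator_long_short hij g (F.gamma_le_Lambda hgΓ), D.bar_one, one_mul, mul_one,
      ← hx.inv_eq (neg_ne i).symm hgi, inv_mul_cancel_right, hg, ← mul_assoc,
      D.weight_mul_bar_weight, one_mul]
  have hm := hx.commutator_short_long (i := neg j) (j := i) hij.symm (-1) b
  rw [← hx.inv_eq (F := ⊤) (by grind) (mem_level_top (by grind) 1)] at hm
  have hq := G.sub_lam_mul_bar_mem
    (G.mul_mem_left (D.weight (neg i)) _ (G.mul_mem_left (-1) _ (G.level_le_I hb)))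
  rw [← G.level_self (neg j)] at hq
  have hmem := commutatorElement_mem_elemComm x hgj hq
  have hcenter := hx.commutatorElement_mem_center hn hP hK (by grind) hgj hq
  rw [← hm] at hmem hcenter
  have key := commutatorElement_mul_commutatorElement_mul (Commute.one_right _)
    (hx.commute_of_fst_ne hP hK (by grind) (by grind) (by grind) hgi hb).symm
    (hx.commute_of_fst_ne hP hK (by grind) (by grind) (by grind) hgj hb).symm hcenter
  rw [one_mul, ← ht] at key
  rw [key]
  exact inv_mem hmem

theorem elemComm_short_le_short (hx : IsSteinbergFamily D x) (hn : 3 ≤ n) (hP : ProdLe F G K)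
    (hK : rootSpan x K Set.univ = ⊥) (hij : i.1 ≠ j.1) (hpq : p.1 ≠ q.1) :
    elemComm x F G i j ≤ elemComm x F G p q := by
  have move {i j k : Idx n} (hij : i.1 ≠ j.1) (hik : i.1 ≠ k.1) :
      elemComm x F G i j ≤ elemComm x F G i k := by
    obtain ⟨h, hhi, hhj⟩ := exists_fst_ne hn i j
    by_cases hk : k.1 = j.1
    · exact (hx.elemComm_short_le hn hP hK hij hhi hhj).trans
        (hx.elemComm_short_le hn hP hK hhi.symm hik.symm (by grind))
    · exact hx.elemComm_short_le hn hP hK hij hik.symm hk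
  obtain ⟨h, hhi, hhp⟩ := exists_fst_ne hn i p
  calc elemComm x F G i j ≤ elemComm x F G i h := move hij hhi.symm
    _ ≤ elemComm x F G h i := hx.elemComm_swap F G (by grind)
    _ ≤ elemComm x F G h p := move hhi hhp
    _ ≤ elemComm x F G p h := hx.elemComm_swap F G (by grind)
    _ ≤ elemComm x F G p q := move hhp.symm hpq

theorem elemComm_long_le_long (hx : IsSteinbergFamily D x) (hn : 3 ≤ n) (hP : ProdLe F G K)
    (hK : rootSpan x K Set.univ = ⊥) (i p : Idx n) :
    elemComm x F G i i ≤ elemComm x F G p p := by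
  obtain ⟨h, hhi, hhp⟩ := exists_fst_ne hn i p
  exact (hx.elemComm_long_le hn hP hK hhi).trans (hx.elemComm_long_le hn hP hK hhp.symm)

end IsSteinbergFamily

/-! ### Generation of commutators by elementary commutators -/

section Map

variable {A : Type*} [Ring A] {D : FormRingData A} {n : ℕ} {H Q : Type*}

theorem image_rootSet (f : H → Q) (x : Idx n → Idx n → A → H) (F : FormIdeal D)
    (R : Set ((Fin n → ℤ) →ₗ[ℤ] ℤ)) :
    f '' rootSet x F R = rootSet (fun i j a => f (x i j a)) F R := by
  ext
  constructor
  · rintro ⟨_, ⟨i, j, a, hij, hR, ha, rfl⟩, rfl⟩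
    exact ⟨i, j, a, hij, hR, ha, rfl⟩
  · rintro ⟨i, j, a, hij, hR, ha, rfl⟩
    exact ⟨_, ⟨i, j, a, hij, hR, ha, rfl⟩, rfl⟩

variable [Group H] [Group Q]

theorem map_rootSpan (f : H →* Q) (x : Idx n → Idx n → A → H) (F : FormIdeal D)
    (R : Set ((Fin n → ℤ) →ₗ[ℤ] ℤ)) :
    (rootSpan x F R).map f = rootSpan (fun i j a => f (x i j a)) F R := by
  rw [rootSpan, rootSpan, MonoidHom.map_closure, image_rootSet]

theorem map_relElem {f : H →* Q} (hf : Function.Surjective f) (x : Idx n → Idx n → A → H)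
    (F : FormIdeal D) : (relElem x F).map f = relElem (fun i j a => f (x i j a)) F := by
  rw [relElem, relElem, Subgroup.map_normalClosure _ _ hf, image_rootSet]

theorem elemComm_le_map (f : H →* Q) (x : Idx n → Idx n → A → H) (F G : FormIdeal D)
    (i j : Idx n) :
    elemComm (fun i j a => f (x i j a)) F G i j ≤ (elemComm x F G i j).map f :=
  elemComm_le_iff.2 fun _ ha _ hb =>
    ⟨_, commutatorElement_mem_elemComm x ha hb, map_commutatorElement ..⟩

theorem mem_relElem {x : Idx n → Idx n → A → H} {F : FormIdeal D} {i j : Idx n} {a : A}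
    (hij : i ≠ Idx.neg j) (ha : a ∈ F.level i j) : x i j a ∈ relElem x F :=
  Subgroup.subset_normalClosure ⟨i, j, a, hij, Set.mem_univ _, ha, rfl⟩

theorem elemComm_le_commutator {x : Idx n → Idx n → A → H} {F G : FormIdeal D} {i j : Idx n}
    (hij : i ≠ Idx.neg j) : elemComm x F G i j ≤ ⁅relElem x F, relElem x G⁆ :=
  elemComm_le_iff.2 fun _ ha _ hb =>
    Subgroup.commutator_mem_commutator (mem_relElem hij ha) (mem_relElem (by grind) hb)

theorem rootSpan_mk_relElem (x : Idx n → Idx n → A → H) (F : FormIdeal D) :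
    rootSpan (fun i j a => QuotientGroup.mk' (relElem x F) (x i j a)) F Set.univ = ⊥ := by
  rw [← map_rootSpan, Subgroup.map_eq_bot_iff, QuotientGroup.ker_mk']
  exact Subgroup.closure_le_normalClosure

theorem IsSteinbergFamily.map {x : Idx n → Idx n → A → H} (hx : IsSteinbergFamily D x)
    {f : H →* Q} (hf : Function.Surjective f) :
    IsSteinbergFamily D (fun i j a => f (x i j a)) where
  closure_eq_top := by
    rw [← map_rootSpan, hx.closure_eq_top, Subgroup.map_top_of_surjective f hf]
  map_add hij a ha b hb := by rw [hx.map_add hij a ha b hb, map_mul]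
  swap hij a := by rw [hx.swap hij]
  commute hij hkl hki hkj hli hlj a ha b hb :=
    (hx.commute hij hkl hki hkj hli hlj a ha b hb).map f
  commutator_short hij hlj hil a b := by
    rw [← map_commutatorElement, hx.commutator_short hij hlj hil]
  commutator_short_long hij a b := by
    rw [← map_commutatorElement, hx.commutator_short_long hij]
  commutator_long_short hlj g hg b := by
    rw [← map_commutatorElement, hx.commutator_long_short hlj g hg, map_mul]

end Map

namespace IsSteinbergFamily

open Idx FormIdeal

variable {A : Type*} [Ring A] {D : FormRingData A} {n : ℕ} {H : Type*} [Group H]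
  {x : Idx n → Idx n → A → H} {F G K : FormIdeal D} {i j r : Idx n} {R : Subgroup H}

theorem elemComm_le_center (hx : IsSteinbergFamily D x) (hn : 3 ≤ n) (hP : ProdLe F G K)
    (hK : rootSpan x K Set.univ = ⊥) (hij : i ≠ neg j) :
    elemComm x F G i j ≤ Subgroup.center H :=
  elemComm_le_iff.2 fun _ ha _ hb => hx.commutatorElement_mem_center hn hP hK hij ha hb

theorem commute_of_elemComm_eq_bot (hx : IsSteinbergFamily D x) (hP : ProdLe F G K)
    (hK : rootSpan x K Set.univ = ⊥) (hE : ∀ i j, i ≠ neg j → elemComm x F G i j = ⊥) :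
    ∀ u ∈ rootSpan x F Set.univ, ∀ v ∈ rootSpan x G Set.univ, Commute u v := by
  suffices h : ∀ u ∈ rootSet x F Set.univ, ∀ v ∈ rootSet x G Set.univ, Commute u v from
    have hle : rootSpan x F Set.univ ≤
        Subgroup.centralizer (rootSpan x G Set.univ : Set H) := by
      rw [rootSpan, rootSpan, Subgroup.centralizer_closure, Subgroup.closure_le]
      exact fun u hu v hv => (h u hu v hv).symm
    fun u hu v hv => (hle hu v hv).symm
  rintro _ ⟨i, j, a, hij, -, ha, rfl⟩ _ ⟨k, l, b, hkl, -, hb, rfl⟩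
  by_cases hopp : root k l = -root i j
  · have opposite {b : A} (hb : b ∈ G.level (neg j) (neg i)) :
        Commute (x i j a) (x (neg j) (neg i) b) := by
      rw [← commutatorElement_eq_one_iff_commute, ← Subgroup.mem_bot, ← hE i j hij]
      exact commutatorElement_mem_elemComm x ha hb
    rcases eq_neg_of_root_eq_neg_root hij hkl hopp with ⟨rfl, rfl⟩ | ⟨rfl, rfl⟩
    · exact opposite hb
    · obtain ⟨b', hb', hbb'⟩ := hx.exists_swap hkl hb
      exact hbb' ▸ opposite hb'
  · exact hx.commute_of_rootSpan_eq_bot hP hK hij hkl hopp ha hb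

theorem commutator_relElem_le_of_rootSpan_eq_bot (hx : IsSteinbergFamily D x) (hn : 3 ≤ n)
    (hP : ProdLe F G K) (hK : rootSpan x K Set.univ = ⊥)
    (hR : ∀ i j, i ≠ neg j → elemComm x F G i j ≤ R) : ⁅relElem x F, relElem x G⁆ ≤ R := by
  let Z := R ⊓ Subgroup.center H
  have : Z.Normal := ⟨fun z hz g => by
    rwa [Subgroup.mem_center_iff.1 hz.2 g, mul_inv_cancel_right]⟩
  have hf := QuotientGroup.mk'_surjective Z
  have hbot {U : Subgroup H} (hU : U ≤ Z) : U.map (QuotientGroup.mk' Z) = ⊥ := by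
    rwa [Subgroup.map_eq_bot_iff, QuotientGroup.ker_mk']
  have hcomm := (hx.map hf).commutator_relElem_eq_bot hn
    ((hx.map hf).commute_of_elemComm_eq_bot hP
      (by rw [← map_rootSpan, hK, Subgroup.map_bot])
      fun i j hij => le_bot_iff.1 ((elemComm_le_map _ x F G i j).trans
        (hbot (le_inf (hR i j hij) (hx.elemComm_le_center hn hP hK hij))).le))
  rw [← map_relElem hf, ← map_relElem hf, ← Subgroup.map_commutator, Subgroup.map_eq_bot_iff,
    QuotientGroup.ker_mk'] at hcomm
  exact hcomm.trans inf_le_left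

theorem elemComm_le_of_long_of_short (hx : IsSteinbergFamily D x) (hn : 3 ≤ n)
    (hP : ProdLe F G K) (hK : rootSpan x K Set.univ = ⊥) (hlong : elemComm x F G r r ≤ R)
    (hshort : F.Gamma = F.I ∨ G.Gamma = G.I ∨ ∃ p q : Idx n, p.1 ≠ q.1 ∧ elemComm x F G p q ≤ R)
    (hij : i ≠ neg j) : elemComm x F G i j ≤ R := by
  have long (i : Idx n) : elemComm x F G i i ≤ R :=
    (hx.elemComm_long_le_long hn hP hK i r).trans hlong
  rcases eq_or_ne i j with rfl | hne
  · exact long i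
  have hij' : i.1 ≠ j.1 := by grind [fst_eq_fst_iff]
  rcases hshort with hF | hG | ⟨p, q, hpq, hR⟩
  · exact (hx.elemComm_short_le_long hn hP hK hF hij'.symm).trans (long i)
  · calc elemComm x F G i j ≤ elemComm x G F (neg j) (neg i) := elemComm_le_elemComm_neg ..
      _ ≤ elemComm x G F (neg j) (neg j) :=
        hx.elemComm_short_le_long hn hP.symm hK hG hij'
      _ ≤ elemComm x F G (neg (neg j)) (neg (neg j)) := elemComm_le_elemComm_neg ..
      _ ≤ R := long _
  · exact (hx.elemComm_short_le_short hn hP hK hij' hpq).trans hR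

theorem commutator_relElem_le (hx : IsSteinbergFamily D x) (hn : 3 ≤ n)
    (hFG : relElem x (F.symProd G) ≤ R) (hlong : elemComm x F G r r ≤ R)
    (hshort : F.Gamma = F.I ∨ G.Gamma = G.I ∨
      ∃ p q : Idx n, p.1 ≠ q.1 ∧ elemComm x F G p q ≤ R) :
    ⁅relElem x F, relElem x G⁆ ≤ R := by
  have hf := QuotientGroup.mk'_surjective (relElem x (F.symProd G))
  have hK := rootSpan_mk_relElem x (F.symProd G)
  have hP := prodLe_symProd F G
  have hmap {p q : Idx n} (h : elemComm x F G p q ≤ R) := (elemComm_le_map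
    (QuotientGroup.mk' (relElem x (F.symProd G))) x F G p q).trans (Subgroup.map_mono h)
  have hle := (hx.map hf).commutator_relElem_le_of_rootSpan_eq_bot hn hP hK fun i j hij =>
    (hx.map hf).elemComm_le_of_long_of_short hn hP hK (hmap hlong)
      (hshort.imp_right (Or.imp_right fun ⟨p, q, hpq, h⟩ => ⟨p, q, hpq, hmap h⟩)) hij
  rwa [← map_relElem hf, ← map_relElem hf, ← Subgroup.map_commutator, Subgroup.map_le_map_iff,
    QuotientGroup.ker_mk', sup_eq_left.2 hFG] at hle

end IsSteinbergFamily

/-! ### Relative subgroups of symmetrised products -/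

namespace IsSteinbergFamily

open Idx FormIdeal

variable {A : Type*} [Ring A] {D : FormRingData A} {n : ℕ} {H : Type*} [Group H]
  {x : Idx n → Idx n → A → H} {F G : FormIdeal D} {i j h : Idx n} {R : Subgroup H} {b g : A}

/-- The additive subgroup of the parameters whose root elements for the root `e i + e j` lie in
`R`. -/
def rootParam (hx : IsSteinbergFamily D x) (R : Subgroup H) (hij : i ≠ neg j) :
    AddSubgroup A where
  carrier := {c | c ∈ (⊤ : FormIdeal D).level i j ∧ x i j c ∈ R}
  zero_mem' := ⟨zero_mem _, (hx.map_zero hij).symm ▸ one_mem R⟩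
  add_mem' := fun ⟨ha, ha'⟩ ⟨hb, hb'⟩ =>
    ⟨add_mem ha hb, (hx.map_add hij _ ha _ hb).symm ▸ mul_mem ha' hb'⟩
  neg_mem' := fun ⟨ha, ha'⟩ => ⟨neg_mem ha, hx.inv_eq hij ha ▸ inv_mem ha'⟩

theorem mem_commutator_of_mem_symI (hx : IsSteinbergFamily D x) (hn : 3 ≤ n) (hij : i.1 ≠ j.1)
    {c : A} (hc : c ∈ (F.symProd G).I) : x i j c ∈ ⁅relElem x F, relElem x G⁆ := by
  obtain ⟨h, hhi, hhj⟩ := exists_fst_ne hn i j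
  have mul_mem {F G : FormIdeal D} {a b : A} (ha : a ∈ F.I) (hb : b ∈ G.I) :
      x i j (a * b) ∈ ⁅relElem x F, relElem x G⁆ := by
    rw [← hx.commutator_short_bar_weight hhi.symm hhj.symm hij]
    refine Subgroup.commutator_mem_commutator (mem_relElem (by grind) ?_)
      (mem_relElem (by grind) ?_)
    · rw [F.level_of_ne (by grind)]
      exact F.mul_mem_left _ _ ha
    · rwa [G.level_of_ne (by grind)]
  have hij' : i ≠ neg j := by grind
  have hle : (F.symProd G).I ≤ hx.rootParam ⁅relElem x F, relElem x G⁆ hij' :=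
    FormRingData.symI_le (fun a ha b hb => ⟨mem_level_top (by grind) _, mul_mem ha hb⟩)
      fun a ha b hb => ⟨mem_level_top (by grind) _,
        Subgroup.commutator_comm (relElem x F) (relElem x G) ▸ mul_mem hb ha⟩
  exact (hle hc).2

theorem conj_mem_of_commutatorElement_mem (hx : IsSteinbergFamily D x) (hhi : h.1 ≠ i.1)
    (hg : g ∈ D.Lambda) (hR : x h i (D.weight (neg h) * (g * D.bar b)) ∈ R)
    (hcomm : ⁅x h h g, x (neg h) i (D.bar b)⁆ ∈ R) : x i i (b * g * D.bar b) ∈ R := by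
  rw [hx.commutator_long_short hhi.symm g hg, D.bar_bar, Subgroup.mul_mem_cancel_left R hR,
    ← hx.inv_eq (F := ⊤) (neg_ne i).symm (by rw [level_self]; exact D.lambda_conj _ _ hg),
    inv_mem_iff] at hcomm
  exact hcomm

theorem conj_mem_commutator (hx : IsSteinbergFamily D x) (hn : 3 ≤ n) (hb : b ∈ G.I)
    (hg : g ∈ F.Gamma) : x i i (b * g * D.bar b) ∈ ⁅relElem x F, relElem x G⁆ := by
  obtain ⟨h, hhi, -⟩ := exists_fst_ne hn i i
  refine hx.conj_mem_of_commutatorElement_mem hhi (F.gamma_le_Lambda hg)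
    (hx.mem_commutator_of_mem_symI hn hhi (FormIdeal.mul_mem_left _ _ _
      (FormRingData.mul_mem_symI (F.gamma_le_I hg) (G.bar_mem _ hb))))
    (Subgroup.commutator_mem_commutator (mem_relElem (by grind) ?_) (mem_relElem (by grind) ?_))
  · rwa [level_self]
  · rw [G.level_of_ne (by grind)]
    exact G.bar_mem _ hb

theorem mem_commutator_of_mem_symG (hx : IsSteinbergFamily D x) (hn : 3 ≤ n)
    (hg : g ∈ (F.symProd G).Gamma) : x i i g ∈ ⁅relElem x F, relElem x G⁆ := by
  obtain ⟨h, hhi, -⟩ := exists_fst_ne hn i i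
  have short {i j : Idx n} {c : A} (hij : i.1 ≠ j.1) (hc : c ∈ (F.symProd G).I) :=
    hx.mem_commutator_of_mem_symI hn hij hc
  suffices hle : (F.symProd G).Gamma ≤
      hx.rootParam ⁅relElem x F, relElem x G⁆ (neg_ne i).symm from (hle hg).2
  refine symG_le_iff.2 ⟨fun a ha => ⟨?_, ?_⟩, fun a ha c hc => ⟨?_, ?_⟩, fun b hb g hg => ⟨?_, ?_⟩,
    fun a ha g hg => ⟨?_, ?_⟩⟩
  · rw [level_self]
    exact D.lambdaMin_mem a
  · have hcomm := hx.commutator_short_long hhi.symm (D.bar (D.weight (neg h)) * a) 1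
    rw [mul_one, ← mul_assoc, D.weight_mul_bar_weight, one_mul] at hcomm
    rw [← hcomm]
    exact Subgroup.commutator_le_left _ ⊤ (Subgroup.commutator_mem_commutator
      (short hhi.symm (FormIdeal.mul_mem_left _ _ _ ha)) (Subgroup.mem_top _))
  · rw [level_self]
    exact D.lambda_conj a c hc
  · have ha' := (F.symProd G).bar_mem a ha
    exact hx.conj_mem_of_commutatorElement_mem hhi hc
      (short hhi (FormIdeal.mul_mem_left _ _ _ (FormIdeal.mul_mem_left _ _ _ ha')))
      (Subgroup.commutator_le_right ⊤ _ (Subgroup.commutator_mem_commutator (Subgroup.mem_top _)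
        (short (by grind) ha')))
  · rw [level_self]
    exact D.lambda_conj b g (F.gamma_le_Lambda hg)
  · exact hx.conj_mem_commutator hn hb hg
  · rw [level_self]
    exact D.lambda_conj a g (G.gamma_le_Lambda hg)
  · exact Subgroup.commutator_comm (relElem x F) (relElem x G) ▸ hx.conj_mem_commutator hn ha hg

theorem relElem_symProd_le (hx : IsSteinbergFamily D x) (hn : 3 ≤ n) (F G : FormIdeal D) :
    relElem x (F.symProd G) ≤ ⁅relElem x F, relElem x G⁆ := by
  refine Subgroup.normalClosure_le_normal ?_
  rintro _ ⟨i, j, c, hij, -, hc, rfl⟩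
  rcases eq_or_ne i j with rfl | hne
  · rw [level_self] at hc
    exact hx.mem_commutator_of_mem_symG hn hc
  · rw [level_of_ne _ hne] at hc
    exact hx.mem_commutator_of_mem_symI hn (by grind [fst_eq_fst_iff]) hc

end IsSteinbergFamily

/-! ### Multiple commutators -/

namespace FormIdeal

variable {A : Type*} [Ring A] {D : FormRingData A} {n : ℕ}

/-- A sufficient condition for the elementary commutators of levels `F` and `G` with indices in
`± S` to generate `[EU(F), EU(G)]` modulo `EU(F ∘ G)`: two indices give a long and a short root; one
index gives a long root only. -/
def Supports (F G : FormIdeal D) (S : Set (Fin n)) : Prop :=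
  S.Nontrivial ∨ S.Nonempty ∧ (F.Gamma = F.I ∨ G.Gamma = G.I)

theorem exists_disjoint_supports {F G K L : FormIdeal D} (hn : 4 ≤ n ∨ 3 ≤ n ∧
      (F.Gamma = F.I ∨ G.Gamma = G.I ∨ K.Gamma = K.I ∨ L.Gamma = L.I)) :
    ∃ S T : Set (Fin n), Disjoint S T ∧ F.Supports G S ∧ K.Supports L T := by
  have hn3 : 3 ≤ n := hn.elim (by lia) And.left
  obtain ⟨i, j, k, hij, hik, hjk⟩ : ∃ i j k : Fin n, i ≠ j ∧ i ≠ k ∧ j ≠ k :=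
    ⟨Fin.castLE hn3 0, Fin.castLE hn3 1, Fin.castLE hn3 2, by simp, by simp, by simp⟩
  have hdisj : Disjoint {i} ({j, k} : Set (Fin n)) := by simp [hij, hik]
  have hpair : ({j, k} : Set (Fin n)).Nontrivial := Set.nontrivial_pair hjk
  by_cases hFG : F.Gamma = F.I ∨ G.Gamma = G.I
  · exact ⟨{i}, {j, k}, hdisj, Or.inr ⟨Set.singleton_nonempty i, hFG⟩, Or.inl hpair⟩
  by_cases hKL : K.Gamma = K.I ∨ L.Gamma = L.I
  · exact ⟨{j, k}, {i}, hdisj.symm, Or.inl hpair, Or.inr ⟨Set.singleton_nonempty i, hKL⟩⟩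
  have hn4 : 4 ≤ n := by tauto
  refine ⟨{Fin.castLE hn4 0, Fin.castLE hn4 1}, {Fin.castLE hn4 2, Fin.castLE hn4 3}, ?_,
    Or.inl (Set.nontrivial_pair ?_), Or.inl (Set.nontrivial_pair ?_)⟩ <;> simp

end FormIdeal

theorem commute_commutatorElement_right {H : Type*} [Group H] {a b c : H} (hb : Commute a b)
    (hc : Commute a c) : Commute a ⁅b, c⁆ :=
  ((hb.mul_right hc).mul_right hb.inv_right).mul_right hc.inv_right

namespace IsSteinbergFamily

open Idx FormIdeal

variable {A : Type*} [Ring A] {D : FormRingData A} {n : ℕ} {H : Type*} [Group H]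
  {x : Idx n → Idx n → A → H} {F G K L : FormIdeal D} {i j h p q : Idx n} {a c d : A}
  {R : Subgroup H} {S T : Set (Fin n)}

theorem commute_of_disjoint (hx : IsSteinbergFamily D x) (hij : i ≠ neg j) (hpq : p ≠ neg q)
    (hi : i.1 ≠ p.1 ∧ i.1 ≠ q.1) (hj : j.1 ≠ p.1 ∧ j.1 ≠ q.1) (ha : a ∈ F.level i j)
    (hc : c ∈ K.level p q) : Commute (x i j a) (x p q c) :=
  hx.commute hij hpq (by grind) (by grind) (by grind) (by grind) a (F.level_le_top ha) c
    (K.level_le_top hc)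

theorem elemComm_le_centralizer (hx : IsSteinbergFamily D x) (hij : i ≠ neg j) (hpq : p ≠ neg q)
    (hi : i.1 ≠ p.1 ∧ i.1 ≠ q.1) (hj : j.1 ≠ p.1 ∧ j.1 ≠ q.1) (ha : a ∈ F.level i j) :
    elemComm x K L p q ≤ Subgroup.centralizer {x i j a} := by
  refine elemComm_le_iff.2 fun c hc d hd => ?_
  have hp := hx.commute_of_disjoint hij hpq hi hj ha hc
  have hq := hx.commute_of_disjoint hij (by grind) (by grind) (by grind) ha hd
  rw [Subgroup.mem_centralizer_singleton_iff]
  exact (commute_commutatorElement_right hp hq).symm.eq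

theorem commute_commutatorElement_short (hx : IsSteinbergFamily D x) (hn : 3 ≤ n)
    (hFKL : ⁅relElem x F, relElem x (K.symProd L)⁆ = ⊥) (hij : i.1 ≠ j.1) (hhi : h.1 ≠ i.1)
    (hhj : h.1 ≠ j.1) (ha : a ∈ F.I) (hc : c ∈ K.I) (hd : d ∈ L.I) :
    Commute (x i j a) ⁅x h (neg i) c, x i (neg h) d⁆ := by
  have hyz : Commute (x i (neg h) d) (x i j a) :=
    hx.commute (by grind) (by grind) (by grind) (by grind) (by grind) (by grind) d
      (mem_level_top (by grind) d) a (mem_level_top (by grind) a)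
  have hc' : -c ∈ K.I := neg_mem hc
  have hhj' : ⁅(x h (neg i) c)⁻¹, x i j a⁆ = x h j (D.weight i * (-c * a)) := by
    have hcomm := hx.commutator_short (j := neg i) hhi hij.symm hhj (-c) a
    rwa [Idx.neg_neg, ← hx.inv_eq (F := ⊤) (by grind) (mem_level_top (by grind) c)] at hcomm
  have hmem : d * (D.weight i * (-c * a)) ∈ (F.symProd (K.symProd L)).I := by
    rw [← mul_assoc, ← mul_assoc]
    exact FormRingData.mul_mem_symI' ha
      (FormRingData.mul_mem_symI' hc' (L.mul_mem_right _ _ hd))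
  refine (commute_commutatorElement ?_ ?_).symm
  · rw [commutatorElement_eq_one_iff_commute.2 hyz.inv_inv]
    exact Commute.one_right _
  · rw [hhj', ← commutatorElement_eq_one_iff_commute, ← Subgroup.mem_bot, ← hFKL]
    have hcomm := hx.commutator_short (j := neg h) hhi.symm hhj.symm hij d
      (D.weight i * (-c * a))
    rw [Idx.neg_neg] at hcomm
    rw [hcomm]
    exact hx.mem_commutator_of_mem_symI hn hij (FormIdeal.mul_mem_left _ _ _ hmem)

theorem commutator_commutator_relElem_eq_bot (hx : IsSteinbergFamily D x) (hn : 3 ≤ n)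
    (hFKL : ⁅relElem x F, relElem x (K.symProd L)⁆ = ⊥) :
    ⁅relElem x F, ⁅relElem x K, relElem x L⁆⁆ = ⊥ := by
  rw [Subgroup.commutator_eq_bot_iff_le_centralizer]
  refine Subgroup.normalClosure_le_normal ?_
  rintro _ ⟨i, j, a, hij, -, ha, rfl⟩
  suffices hle : ⁅relElem x K, relElem x L⁆ ≤ Subgroup.centralizer {x i j a} from
    fun z hz => Subgroup.mem_centralizer_singleton_iff.1 (hle hz)
  obtain ⟨h, hhi, hhj⟩ := exists_fst_ne hn i j
  refine hx.commutator_relElem_le hn (r := h) ?_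
    (hx.elemComm_le_centralizer hij (by grind) (by grind) (by grind) ha) (Or.inr (Or.inr ?_))
  · intro z hz
    rw [Subgroup.mem_centralizer_singleton_iff]
    exact Subgroup.commutator_eq_bot_iff_le_centralizer.1 hFKL (mem_relElem hij ha) z hz
  rcases eq_or_ne i j with rfl | hne
  · obtain ⟨k, hki, hkh⟩ := exists_fst_ne hn i h
    exact ⟨h, k, hkh.symm, hx.elemComm_le_centralizer hij (by grind) (by grind) (by grind) ha⟩
  · have hij' : i.1 ≠ j.1 := by grind [fst_eq_fst_iff]
    refine ⟨h, neg i, hhi, elemComm_le_iff.2 fun c hc d hd => ?_⟩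
    rw [Idx.neg_neg, Subgroup.mem_centralizer_singleton_iff]
    exact (hx.commute_commutatorElement_short hn hFKL hij' hhi hhj (F.level_le_I ha)
      (K.level_le_I hc) (L.level_le_I hd)).symm.eq

theorem commutator_relElem_le_of_supports (hx : IsSteinbergFamily D x) (hn : 3 ≤ n)
    (hS : F.Supports G S) (hFG : relElem x (F.symProd G) ≤ R)
    (hR : ∀ p q : Idx n, p.1 ∈ S → q.1 ∈ S → p ≠ neg q → elemComm x F G p q ≤ R) :
    ⁅relElem x F, relElem x G⁆ ≤ R := by
  obtain ⟨r, hr⟩ : S.Nonempty := hS.elim Set.Nontrivial.nonempty And.left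
  refine hx.commutator_relElem_le hn hFG (hR (r, true) (r, true) hr hr (neg_ne _).symm) ?_
  rcases hS with ⟨p, hp, q, hq, hpq⟩ | ⟨-, hF | hG⟩
  · exact Or.inr (Or.inr ⟨(p, true), (q, true), hpq, hR _ _ hp hq (by grind)⟩)
  · exact Or.inl hF
  · exact Or.inr (Or.inl hG)

theorem commutator_commutator_eq_bot (hx : IsSteinbergFamily D x) (hn : 3 ≤ n)
    (hS : F.Supports G S) (hT : K.Supports L T) (hST : Disjoint S T)
    (hbot : ⁅relElem x (F.symProd G), relElem x (K.symProd L)⁆ = ⊥) :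
    ⁅⁅relElem x F, relElem x G⁆, ⁅relElem x K, relElem x L⁆⁆ = ⊥ := by
  have hFG := hx.commutator_commutator_relElem_eq_bot hn hbot
  have hKL := hx.commutator_commutator_relElem_eq_bot hn (F := K.symProd L) (K := F) (L := G)
    (Subgroup.commutator_comm _ _ |>.trans hbot)
  rw [Subgroup.commutator_eq_bot_iff_le_centralizer] at hFG hKL ⊢
  refine hx.commutator_relElem_le_of_supports hn hS hFG fun p q hp hq hpq => ?_
  rw [Subgroup.le_centralizer_iff]
  refine hx.commutator_relElem_le_of_supports hn hT
    (hKL.trans (Subgroup.centralizer_le (elemComm_le_commutator hpq))) fun r s hr hs hrs => ?_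
  rw [← Subgroup.le_centralizer_iff]
  have hne {u v : Fin n} (hu : u ∈ S) (hv : v ∈ T) : u ≠ v := hST.ne_of_mem hu hv
  refine elemComm_le_iff.2 fun a ha b hb z hz => ?_
  have central {k l : Idx n} (hkl : k ≠ neg l) (hk : k.1 ∈ S) (hl : l.1 ∈ S) {E : FormIdeal D}
      {e : A} (he : e ∈ E.level k l) : Commute z (x k l e) :=
    Subgroup.mem_centralizer_singleton_iff.1 (hx.elemComm_le_centralizer hkl hrs
      ⟨hne hk hr, hne hk hs⟩ ⟨hne hl hr, hne hl hs⟩ he hz)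
  exact commute_commutatorElement_right (central hpq hp hq ha)
    (central (k := neg q) (l := neg p) (by grind) hq hp hb)

theorem commutator_commutator_relElem (hx : IsSteinbergFamily D x) (hn : 3 ≤ n)
    (hS : F.Supports G S) (hT : K.Supports L T) (hST : Disjoint S T) :
    ⁅⁅relElem x F, relElem x G⁆, ⁅relElem x K, relElem x L⁆⁆ =
      ⁅relElem x (F.symProd G), relElem x (K.symProd L)⁆ := by
  refine le_antisymm ?_ (Subgroup.commutator_mono (hx.relElem_symProd_le hn F G)
    (hx.relElem_symProd_le hn K L))
  set W := ⁅relElem x (F.symProd G), relElem x (K.symProd L)⁆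
  have hf := QuotientGroup.mk'_surjective W
  have hbot := (hx.map hf).commutator_commutator_eq_bot hn hS hT hST (by
    rw [← map_relElem hf, ← map_relElem hf, ← Subgroup.map_commutator, Subgroup.map_eq_bot_iff,
      QuotientGroup.ker_mk'])
  simpa only [← map_relElem hf, ← Subgroup.map_commutator, Subgroup.map_eq_bot_iff,
    QuotientGroup.ker_mk'] using hbot

end IsSteinbergFamily

/-! ## Elementary unitary groups -/

section Subgroup

variable {G : Type*} [Group G] {K : Subgroup G}

theorem coe_commutatorElement (a b : K) : ((⁅a, b⁆ : K) : G) = ⁅(a : G), (b : G)⁆ := rfl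

theorem map_subtype_normalClosure (s : Set K) :
    (Subgroup.normalClosure s).map K.subtype =
      Subgroup.closure {x | ∃ g ∈ K, ∃ t ∈ K.subtype '' s, x = g * t * g⁻¹} := by
  rw [Subgroup.normalClosure, MonoidHom.map_closure]
  congr 1
  ext x
  constructor
  · rintro ⟨_, ht, rfl⟩
    obtain ⟨t, hs, hconj⟩ := Group.mem_conjugatesOfSet_iff.1 ht
    obtain ⟨g, rfl⟩ := isConj_iff.1 hconj
    exact ⟨g, g.2, t, ⟨t, hs, rfl⟩, rfl⟩
  · rintro ⟨g, hg, _, ⟨t, hs, rfl⟩, rfl⟩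
    exact ⟨⟨g, hg⟩ * t * ⟨g, hg⟩⁻¹,
      Group.mem_conjugatesOfSet_iff.2 ⟨t, hs, isConj_iff.2 ⟨_, rfl⟩⟩, rfl⟩

end Subgroup

namespace FormRingData

variable {A : Type*} [Ring A] {n : ℕ} (D : FormRingData A)

theorem transvGen_eq (F : FormIdeal D) :
    D.transvGen n F.I F.Gamma = rootSet D.rootElem F Set.univ := by
  ext t
  constructor
  · rintro (⟨i, j, hij, hij', c, hc, rfl⟩ | ⟨i, g, hg, rfl⟩)
    · refine ⟨i, Idx.neg j, D.bar (D.weight i) * c, by rwa [Idx.neg_neg], Set.mem_univ _, ?_, ?_⟩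
      · rw [F.level_of_ne hij']
        exact F.mul_mem_left _ _ hc
      · rw [rootElem, if_neg hij', Idx.neg_neg, ← mul_assoc, D.weight_mul_bar_weight, one_mul]
    · refine ⟨i, i, g, (Idx.neg_ne i).symm, Set.mem_univ _, ?_, ?_⟩
      · rwa [F.level_self]
      · rw [rootElem, if_pos rfl, weight]
  · rintro ⟨i, j, a, hij, -, ha, rfl⟩
    rcases eq_or_ne i j with rfl | hne
    · rw [F.level_self] at ha
      exact Or.inr ⟨i, a, ha, by rw [rootElem, if_pos rfl, weight]⟩
    · exact Or.inl ⟨i, Idx.neg j, hij, by rwa [Idx.neg_neg], D.weight i * a,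
        F.mul_mem_left _ _ (F.level_le_I ha), by rw [rootElem, if_neg hne]⟩

theorem EUmax_eq : D.EUmax n = rootSpan D.rootElem (⊤ : FormIdeal D) Set.univ :=
  congrArg Subgroup.closure (D.transvGen_eq ⊤)

open Classical in
/-- The root elements as elements of the absolute elementary group, with junk value `1` at the long
root positions for parameters outside `Λ`. -/
noncomputable def rootElemEU (i j : Idx n) (a : A) : D.EUmax n :=
  if h : D.rootElem i j a ∈ D.EUmax n then ⟨D.rootElem i j a, h⟩ else 1

theorem coe_rootElemEU {i j : Idx n} {a : A} (hij : i ≠ Idx.neg j)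
    (ha : a ∈ (⊤ : FormIdeal D).level i j) :
    (D.rootElemEU i j a : GLn A n) = D.rootElem i j a := by
  have hmem : D.rootElem i j a ∈ D.EUmax n := by
    rw [D.EUmax_eq]
    exact mem_rootSpan hij (Set.mem_univ _) ha
  rw [rootElemEU, dif_pos hmem]

theorem coe_rootElemEU_short {i j : Idx n} (h : i.1 ≠ j.1) (a : A) :
    (D.rootElemEU i j a : GLn A n) = D.rootElem i j a :=
  D.coe_rootElemEU (Idx.ne_neg_of_fst_ne h) (FormIdeal.mem_level_top (by grind) a)

theorem coe_rootElemEU_long (i : Idx n) {a : A} (ha : a ∈ D.Lambda) :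
    (D.rootElemEU i i a : GLn A n) = D.rootElem i i a :=
  D.coe_rootElemEU (Idx.neg_ne i).symm (by rwa [FormIdeal.level_self])

theorem image_rootSet_rootElemEU (F : FormIdeal D) :
    (D.EUmax n).subtype '' rootSet D.rootElemEU F Set.univ = D.transvGen n F.I F.Gamma := by
  rw [image_rootSet, D.transvGen_eq]
  have hcoe {i j : Idx n} {a : A} (hij : i ≠ Idx.neg j) (ha : a ∈ F.level i j) :
      (D.EUmax n).subtype (D.rootElemEU i j a) = D.rootElem i j a :=
    D.coe_rootElemEU hij (F.level_le_top ha)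
  ext t
  constructor
  · rintro ⟨i, j, a, hij, hR, ha, rfl⟩
    exact ⟨i, j, a, hij, hR, ha, (hcoe hij ha).symm⟩
  · rintro ⟨i, j, a, hij, hR, ha, rfl⟩
    exact ⟨i, j, a, hij, hR, ha, hcoe hij ha⟩

theorem rootSpan_rootElemEU : rootSpan (D.rootElemEU (n := n)) (⊤ : FormIdeal D) Set.univ = ⊤ := by
  refine Subgroup.map_injective (D.EUmax n).subtype_injective ?_
  rw [rootSpan, MonoidHom.map_closure, image_rootSet_rootElemEU, ← MonoidHom.range_eq_map,
    Subgroup.range_subtype]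
  rfl

theorem isSteinbergFamily_rootElemEU : IsSteinbergFamily D (D.rootElemEU (n := n)) where
  closure_eq_top := D.rootSpan_rootElemEU
  map_add hij a ha b hb := Subtype.ext <| by
    rw [Subgroup.coe_mul, D.coe_rootElemEU hij ha, D.coe_rootElemEU hij hb,
      D.coe_rootElemEU hij (add_mem ha hb), D.rootElem_add hij]
  swap h a := Subtype.ext <| by
    rw [D.coe_rootElemEU_short h, D.coe_rootElemEU_short h.symm, D.rootElem_swap h]
  commute hij hkl hki hkj hli hlj a ha b hb := Subtype.ext <| by
    rw [Subgroup.coe_mul, Subgroup.coe_mul, D.coe_rootElemEU hij ha, D.coe_rootElemEU hkl hb]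
    exact D.rootElem_commute hij hkl hki hkj hli hlj a b
  commutator_short hij hlj hil a b := Subtype.ext <| by
    rw [coe_commutatorElement, D.coe_rootElemEU_short hij,
      D.coe_rootElemEU_short (i := Idx.neg _) hlj.symm, D.coe_rootElemEU_short hil,
      D.commutator_rootElem_short hij hlj hil]
  commutator_short_long hij a b := Subtype.ext <| by
    rw [coe_commutatorElement, D.coe_rootElemEU_short hij,
      D.coe_rootElemEU_short (i := Idx.neg _) hij.symm,
      D.coe_rootElemEU_long _ (D.lambdaMin_mem _),
      D.commutator_rootElem_short_long hij]
  commutator_long_short {j l} hlj g hg b := Subtype.ext <| by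
    have hconj : -(D.bar b * g * b) ∈ D.Lambda := by
      simpa only [D.bar_bar] using neg_mem (D.lambda_conj (D.bar b) g hg)
    rw [coe_commutatorElement, Subgroup.coe_mul, D.coe_rootElemEU_long _ hg,
      D.coe_rootElemEU_short (i := Idx.neg j) hlj.symm, D.coe_rootElemEU_short hlj.symm,
      D.coe_rootElemEU_long _ hconj, D.commutator_rootElem_long_short hlj hg]

theorem EU_eq (F : FormIdeal D) :
    D.EU n F.I F.Gamma = (relElem D.rootElemEU F).map (D.EUmax n).subtype := by
  rw [relElem, map_subtype_normalClosure, image_rootSet_rootElemEU, EU]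

end FormRingData

/-- Lemma 15 (quadruple commutators): for `n ≥ 4`, or `n ≥ 3` when one of the
ideals equals its relative form parameter,
`[[EU(I,Γ),EU(J,Δ)],[EU(K,Θ),EU(L,Ξ)]] = [EU((I,Γ)∘(J,Δ)), EU((K,Θ)∘(L,Ξ))]`. -/
theorem statement18 {A : Type*} [Ring A] (D : FormRingData A) (n : ℕ)
    (FI FJ FK FL : FormIdeal D)
    (hn : 4 ≤ n ∨ (3 ≤ n ∧
      (FI.Gamma = FI.I ∨ FJ.Gamma = FJ.I ∨ FK.Gamma = FK.I ∨ FL.Gamma = FL.I))) :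
    ⁅⁅D.EU n FI.I FI.Gamma, D.EU n FJ.I FJ.Gamma⁆,
        ⁅D.EU n FK.I FK.Gamma, D.EU n FL.I FL.Gamma⁆⁆ =
      ⁅D.EUsym n FI.I FI.Gamma FJ.I FJ.Gamma,
        D.EUsym n FK.I FK.Gamma FL.I FL.Gamma⁆ := by
  have hn3 : 3 ≤ n := hn.elim (by lia) And.left
  obtain ⟨S, T, hST, hS, hT⟩ := FormIdeal.exists_disjoint_supports hn
  have h := congrArg (Subgroup.map (D.EUmax n).subtype)
    (D.isSteinbergFamily_rootElemEU.commutator_commutator_relElem hn3 hS hT hST)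
  simp only [Subgroup.map_commutator, ← D.EU_eq] at h
  exact h
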